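/- arXiv:2506.24058 — 6 statements merged into one kernel-verified Lean document; each statement's English description precedes it below -/
import Mathlib

section
/- Let n ≥ 1. Assume b : [0,∞) → ℝ is C² with b(t) > 0 and b'(t) > 0 for all t, |b'(t)| ≤ C b(t)/(1+t) and |b''(t)| ≤ C b(t)/(1+t)² for all t (some C > 0), ∫₀^∞ 1/b(τ) dτ < ∞, and b'(t) = o(b(t)²) as t → ∞ (i.e. for every ε > 0 there is T with |b'(t)| ≤ ε b(t)² for t ≥ T). Assume g : [0,∞) → ℝ is C² with g(t) > 0 and g'(t) > 0 for all t, ∫₀^∞ 1/g(τ) dτ < ∞, and, with G(t) = ½∫₀ᵗ g(τ) dτ, there are constants C₁, C₂ > 0 with |g'(t)| ≤ C₁ g(t)²/G(t) and |g''(t)| ≤ C₂ g(t)³/G(t)² for all t > 0. Write ⟨ξ⟩ = (1+|ξ|²)^{1/2}. Then for every real σ ≥ 0 there is C' > 0 such that every Fourier solution û with data û₀, û₁ satisfies for all t ≥ 0 (whenever the data integrals are finite): (∫ |ξ|^{2σ}|û(t,ξ)|² dξ)^{1/2} ≤ C'[ (∫ |ξ|^{2σ}|û₀|² dξ)^{1/2}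 + (∫ |ξ|^{2σ}⟨ξ⟩^{−4}|û₁|² dξ)^{1/2} ] and (∫ |ξ|^{2σ}|∂ₜû(t,ξ)|² dξ)^{1/2} ≤ C' g(t)[ (∫ |ξ|^{2(σ+2)}|û₀|² dξ)^{1/2} + (∫ |ξ|^{2(σ+2)}⟨ξ⟩^{−4}|û₁|² dξ)^{1/2} ] + C' b(t)[ (∫ |ξ|^{2σ}|û₀|² dξ)^{1/2} + (∫ |ξ|^{2σ}⟨ξ⟩^{−4}|û₁|² dξ)^{1/2} ]. -/
open MeasureTheory Filter

/-!
For a fixed frequency of size `r`, put `a(t) = b(t) + g(t) r²`, so that the mode solves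
`u'' + r² u + a u' = 0` with `a` nondecreasing. Formally, the quantity `‖u‖ + ‖u'‖ / a` grows at
rate at most `r² / a ≤ 1 / g`: the term `‖u'‖` produced by `‖u‖` is cancelled by the damping, and
differentiating `1 / a` only helps. Since `1 / g` is integrable, Grönwall's inequality bounds this
quantity by a multiple of its initial value, uniformly in time and frequency.

As norms need not be differentiable, the computation is carried out on scalar majorants `p ≥ ‖u'‖`
and `q ≥ ‖u‖` solving `p' = r² ‖u‖ - a p` and `q' = p`. At time `0` the coefficient `a` dominates a
multiple of `1 + r²`, which is the source of the weight `⟨ξ⟩⁻⁴`; integrating over frequencies gives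
the estimates.
-/

section Comparison

open Set Real

variable {E : Type*} [NormedAddCommGroup E] [NormedSpace ℝ E] {t₀ T t : ℝ}

lemma hasDerivWithinAt_integral_Icc {f : ℝ → ℝ} (hf : ContinuousOn f (Icc t₀ T))
    (ht : t ∈ Icc t₀ T) :
    HasDerivWithinAt (fun x => ∫ s in t₀..x, f s) (f t) (Icc t₀ T) t := by
  have : Fact (t ∈ Icc t₀ T) := ⟨ht⟩
  exact intervalIntegral.integral_hasDerivWithinAt_right
    ((hf.mono (Icc_subset_Icc_right ht.2)).intervalIntegrable_of_Icc ht.1)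
    (hf.stronglyMeasurableAtFilter_nhdsWithin measurableSet_Icc t) (hf t ht)

lemma norm_le_of_hasDerivWithinAt_Icc {f f' : ℝ → E} {B B' : ℝ → ℝ}
    (hf : ∀ s ∈ Icc t₀ T, HasDerivWithinAt f (f' s) (Icc t₀ T) s)
    (hB : ∀ s ∈ Icc t₀ T, HasDerivWithinAt B (B' s) (Icc t₀ T) s)
    (h₀ : ‖f t₀‖ ≤ B t₀) (hle : ∀ s ∈ Icc t₀ T, ‖f' s‖ ≤ B' s) (ht : t ∈ Icc t₀ T) :
    ‖f t‖ ≤ B t :=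
  image_norm_le_of_norm_deriv_right_le_deriv_boundary'
    (HasDerivWithinAt.continuousOn hf)
    (fun s hs => (hf s (Ico_subset_Icc_self hs)).mono_of_mem_nhdsWithin
      (Icc_mem_nhdsGE_of_mem hs))
    h₀ (HasDerivWithinAt.continuousOn hB)
    (fun s hs => (hB s (Ico_subset_Icc_self hs)).mono_of_mem_nhdsWithin
      (Icc_mem_nhdsGE_of_mem hs))
    (fun s hs => hle s (Ico_subset_Icc_self hs)) ht

lemma le_exp_integral_mul_of_hasDerivWithinAt_le {W W' κ : ℝ → ℝ}
    (hκ : ContinuousOn κ (Icc t₀ T))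
    (hW : ∀ s ∈ Icc t₀ T, HasDerivWithinAt W (W' s) (Icc t₀ T) s)
    (hle : ∀ s ∈ Icc t₀ T, W' s ≤ κ s * W s) (ht : t ∈ Icc t₀ T) :
    W t ≤ exp (∫ s in t₀..t, κ s) * W t₀ := by
  set Γ : ℝ → ℝ := fun x => ∫ s in t₀..x, κ s
  have hderiv : ∀ s ∈ Icc t₀ T, HasDerivWithinAt (fun x => exp (-Γ x) * W x)
      (exp (-Γ s) * -κ s * W s + exp (-Γ s) * W' s) (Icc t₀ T) s := fun s hs =>
    (hasDerivWithinAt_integral_Icc hκ hs).fun_neg.exp.mul (hW s hs)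
  have hanti : AntitoneOn (fun x => exp (-Γ x) * W x) (Icc t₀ T) :=
    antitoneOn_of_hasDerivWithinAt_nonpos (convex_Icc _ _)
      (HasDerivWithinAt.continuousOn hderiv)
      (fun s hs => (hderiv s (interior_subset hs)).mono interior_subset)
      (fun s hs => by
        have := mul_le_mul_of_nonneg_left (hle s (interior_subset hs)) (exp_pos (-Γ s)).le
        linarith)
  have hΓ₀ : Γ t₀ = 0 := intervalIntegral.integral_same
  have hdecay : exp (-Γ t) * W t ≤ W t₀ := by
    simpa [hΓ₀] using hanti (left_mem_Icc.2 (ht.1.trans ht.2)) ht ht.1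
  calc W t = exp (Γ t) * (exp (-Γ t) * W t) := by
        rw [← mul_assoc, ← exp_add, add_neg_cancel, exp_zero, one_mul]
    _ ≤ exp (Γ t) * W t₀ := by gcongr

lemma exists_norm_le_of_hasDerivWithinAt_sub_smul {a : ℝ → ℝ} {v F : ℝ → E}
    (ha : ContinuousOn a (Icc t₀ T)) (hF : ContinuousOn F (Icc t₀ T))
    (hv : ∀ s ∈ Icc t₀ T, HasDerivWithinAt v (F s - a s • v s) (Icc t₀ T) s) :
    ∃ p : ℝ → ℝ, p t₀ = ‖v t₀‖ ∧
      (∀ s ∈ Icc t₀ T, HasDerivWithinAt p (‖F s‖ - a s * p s) (Icc t₀ T) s) ∧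
      ∀ s ∈ Icc t₀ T, ‖v s‖ ≤ p s := by
  set A : ℝ → ℝ := fun x => ∫ s in t₀..x, a s
  have hA : ∀ s ∈ Icc t₀ T, HasDerivWithinAt A (a s) (Icc t₀ T) s :=
    fun s hs => hasDerivWithinAt_integral_Icc ha hs
  have hA₀ : A t₀ = 0 := intervalIntegral.integral_same
  set B : ℝ → ℝ := fun x => ‖v t₀‖ + ∫ s in t₀..x, exp (A s) * ‖F s‖
  have hB : ∀ s ∈ Icc t₀ T, HasDerivWithinAt B (exp (A s) * ‖F s‖) (Icc t₀ T) s :=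
    fun s hs => (hasDerivWithinAt_integral_Icc
      ((HasDerivWithinAt.continuousOn hA).rexp.mul hF.norm) hs).const_add _
  have hB₀ : B t₀ = ‖v t₀‖ := by simp [B]
  have hexp_smul : ∀ s ∈ Icc t₀ T,
      HasDerivWithinAt (fun x => exp (A x) • v x) (exp (A s) • F s) (Icc t₀ T) s :=
    fun s hs => ((hA s hs).exp.fun_smul (hv s hs)).congr_deriv (by module)
  refine ⟨fun x => exp (-A x) * B x, by simp [hA₀, hB₀], fun s hs => ?_, fun s hs => ?_⟩
  · refine ((hA s hs).fun_neg.exp.fun_mul (hB s hs)).congr_deriv ?_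
    rw [← mul_assoc (exp (-A s)) (exp (A s)), ← exp_add, neg_add_cancel, exp_zero]
    ring
  · have hle : ‖exp (A s) • v s‖ ≤ B s :=
      norm_le_of_hasDerivWithinAt_Icc hexp_smul hB (by simp [hA₀, hB₀])
        (fun x _ => by rw [norm_smul, norm_of_nonneg (exp_pos _).le]) hs
    rw [norm_smul, norm_of_nonneg (exp_pos _).le] at hle
    change ‖v s‖ ≤ exp (-A s) * B s
    rwa [exp_neg, ← div_eq_inv_mul, le_div_iff₀' (exp_pos _)]

lemma add_div_le_exp_integral_mul {a a' p q f κ : ℝ → ℝ}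
    (ha : ∀ s ∈ Icc t₀ T, HasDerivWithinAt a (a' s) (Icc t₀ T) s)
    (ha_pos : ∀ s ∈ Icc t₀ T, 0 < a s) (ha'_nonneg : ∀ s ∈ Icc t₀ T, 0 ≤ a' s)
    (hp : ∀ s ∈ Icc t₀ T, HasDerivWithinAt p (f s - a s * p s) (Icc t₀ T) s)
    (hp_nonneg : ∀ s ∈ Icc t₀ T, 0 ≤ p s)
    (hq : ∀ s ∈ Icc t₀ T, HasDerivWithinAt q (p s) (Icc t₀ T) s)
    (hκ : ContinuousOn κ (Icc t₀ T)) (hκ_nonneg : ∀ s ∈ Icc t₀ T, 0 ≤ κ s)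
    (hf : ∀ s ∈ Icc t₀ T, f s ≤ κ s * a s * q s) (ht : t ∈ Icc t₀ T) :
    q t + p t / a t ≤ exp (∫ s in t₀..t, κ s) * (q t₀ + p t₀ / a t₀) := by
  refine le_exp_integral_mul_of_hasDerivWithinAt_le (W := fun s => q s + p s / a s) hκ
    (fun s hs => (hq s hs).add ((hp s hs).div (ha s hs) (ha_pos s hs).ne')) (fun s hs => ?_) ht
  have has := ha_pos s hs
  have hps := hp_nonneg s hs
  have ha's := ha'_nonneg s hs
  have hκs := hκ_nonneg s hs
  calc p s + ((f s - a s * p s) * a s - p s * a' s) / a s ^ 2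
      = f s / a s - p s * a' s / a s ^ 2 := by field_simp; ring
    _ ≤ f s / a s := sub_le_self _ (by positivity)
    _ ≤ κ s * q s := by rw [div_le_iff₀ has]; linarith [hf s hs]
    _ ≤ κ s * (q s + p s / a s) := by gcongr; exact le_add_of_nonneg_right (by positivity)

end Comparison

section DampedOscillator

open Set Real

variable {E : Type*} [NormedAddCommGroup E] [NormedSpace ℝ E] {t₀ T t : ℝ}

/-- On the time set `s`, the function `u` with velocity `v` solves `u'' + k u + a u' = 0`, written
as a first-order system whose derivatives are taken within `s`. -/
structure IsDampedOscillator (k a : ℝ → ℝ) (u v : ℝ → E) (s : Set ℝ) : Prop where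
  hasDerivWithinAt : ∀ t ∈ s, HasDerivWithinAt u (v t) s t
  hasDerivWithinAt_velocity : ∀ t ∈ s, HasDerivWithinAt v (-(k t • u t) - a t • v t) s t

namespace IsDampedOscillator

variable {k a a' κ : ℝ → ℝ} {u v : ℝ → E} {s s' : Set ℝ}

lemma mono (h : IsDampedOscillator k a u v s) (hs : s' ⊆ s) : IsDampedOscillator k a u v s' where
  hasDerivWithinAt t ht := (h.hasDerivWithinAt t (hs ht)).mono hs
  hasDerivWithinAt_velocity t ht := (h.hasDerivWithinAt_velocity t (hs ht)).mono hs

lemma of_deriv (hu : Differentiable ℝ u) (hu' : Differentiable ℝ (deriv u))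
    (hode : ∀ t ∈ s, deriv (deriv u) t + k t • u t + a t • deriv u t = 0) :
    IsDampedOscillator k a u (deriv u) s where
  hasDerivWithinAt t _ := (hu t).hasDerivAt.hasDerivWithinAt
  hasDerivWithinAt_velocity t ht := (hu' t).hasDerivAt.hasDerivWithinAt.congr_deriv <| by
    rw [← sub_eq_zero, ← hode t ht]
    abel

theorem norm_add_norm_div_le (h : IsDampedOscillator k a u v (Icc t₀ T))
    (hk : ContinuousOn k (Icc t₀ T)) (hκ : ContinuousOn κ (Icc t₀ T))
    (ha : ∀ s ∈ Icc t₀ T, HasDerivWithinAt a (a' s) (Icc t₀ T) s)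
    (ha_pos : ∀ s ∈ Icc t₀ T, 0 < a s) (ha'_nonneg : ∀ s ∈ Icc t₀ T, 0 ≤ a' s)
    (hkκ : ∀ s ∈ Icc t₀ T, |k s| ≤ κ s * a s) (ht : t ∈ Icc t₀ T) :
    ‖u t‖ + ‖v t‖ / a t ≤ exp (∫ s in t₀..t, κ s) * (‖u t₀‖ + ‖v t₀‖ / a t₀) := by
  have hu := HasDerivWithinAt.continuousOn h.hasDerivWithinAt
  have hκ_nonneg : ∀ s ∈ Icc t₀ T, 0 ≤ κ s := fun s hs =>
    nonneg_of_mul_nonneg_left ((abs_nonneg _).trans (hkκ s hs)) (ha_pos s hs)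
  obtain ⟨p, hp₀, hp, hvp⟩ := exists_norm_le_of_hasDerivWithinAt_sub_smul
    (HasDerivWithinAt.continuousOn ha) (hk.smul hu).neg h.hasDerivWithinAt_velocity
  set q : ℝ → ℝ := fun x => ‖u t₀‖ + ∫ s in t₀..x, p s
  have hq : ∀ s ∈ Icc t₀ T, HasDerivWithinAt q (p s) (Icc t₀ T) s := fun s hs =>
    (hasDerivWithinAt_integral_Icc (HasDerivWithinAt.continuousOn hp) hs).const_add _
  have hq₀ : q t₀ = ‖u t₀‖ := by simp [q]
  have huq : ∀ s ∈ Icc t₀ T, ‖u s‖ ≤ q s := fun s hs =>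
    norm_le_of_hasDerivWithinAt_Icc h.hasDerivWithinAt hq hq₀.ge hvp hs
  have hforce : ∀ s ∈ Icc t₀ T, ‖-(k s • u s)‖ ≤ κ s * a s * q s := fun s hs => by
    rw [norm_neg, norm_smul, norm_eq_abs]
    exact mul_le_mul (hkκ s hs) (huq s hs) (norm_nonneg _) ((abs_nonneg _).trans (hkκ s hs))
  have hat := ha_pos t ht
  calc ‖u t‖ + ‖v t‖ / a t ≤ q t + p t / a t := by
        gcongr
        exacts [huq t ht, hvp t ht]
    _ ≤ exp (∫ s in t₀..t, κ s) * (q t₀ + p t₀ / a t₀) :=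
        add_div_le_exp_integral_mul ha ha_pos ha'_nonneg hp
          (fun s hs => (norm_nonneg _).trans (hvp s hs)) hq hκ hκ_nonneg hforce ht
    _ = _ := by rw [hq₀, hp₀]

end IsDampedOscillator

end DampedOscillator

section Mode

open Set Real

variable {E : Type*} [NormedAddCommGroup E] [NormedSpace ℝ E] {b g : ℝ → ℝ} {t : ℝ}

/-- A damping coefficient on `[0, ∞)`: differentiable, nondecreasing and positive. By monotonicity,
positivity is only required at time `0`. -/
structure IsDampingCoefficient (c : ℝ → ℝ) : Prop where
  differentiableOn : DifferentiableOn ℝ c (Ici 0)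
  monotoneOn : MonotoneOn c (Ici 0)
  pos_zero : 0 < c 0

namespace IsDampingCoefficient

lemma of_deriv_nonneg {c : ℝ → ℝ} (hc : Differentiable ℝ c) (hc₀ : 0 < c 0)
    (hc' : ∀ t, 0 < t → 0 ≤ deriv c t) : IsDampingCoefficient c where
  differentiableOn := hc.differentiableOn
  monotoneOn := monotoneOn_of_deriv_nonneg (convex_Ici 0) hc.continuous.continuousOn
    hc.differentiableOn fun t ht => hc' t (by simpa using ht)
  pos_zero := hc₀

lemma pos {c : ℝ → ℝ} (hc : IsDampingCoefficient c) (ht : 0 ≤ t) : 0 < c t :=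
  hc.pos_zero.trans_le (hc.monotoneOn self_mem_Ici ht ht)

lemma integral_inv_le_integral_Ici (hg : IsDampingCoefficient g)
    (hg_int : IntegrableOn (fun s => (g s)⁻¹) (Ici 0)) (ht : 0 ≤ t) :
    ∫ s in 0..t, (g s)⁻¹ ≤ ∫ s in Ici 0, (g s)⁻¹ := by
  rw [intervalIntegral.integral_of_le ht]
  refine setIntegral_mono_set hg_int ?_
    (Ioc_subset_Icc_self.trans Icc_subset_Ici_self).eventuallyLE
  filter_upwards [ae_restrict_mem measurableSet_Ici] with s hs
  exact (inv_pos.2 (hg.pos hs)).le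

end IsDampingCoefficient

/-- `u`, with velocity `v`, is a mode of `u_tt - Δu + b(t) u_t - g(t) Δu_t = 0` at a frequency of
size `r`, on the time interval `[0, ∞)`. -/
abbrev IsViscoelasticMode (b g : ℝ → ℝ) (r : ℝ) (u v : ℝ → E) : Prop :=
  IsDampedOscillator (fun _ => r ^ 2) (fun t => b t + g t * r ^ 2) u v (Ici 0)

theorem IsViscoelasticMode.norm_add_norm_div_le_exp_integral_inv
    (hb : IsDampingCoefficient b) (hg : IsDampingCoefficient g)
    (hg_int : IntegrableOn (fun s => (g s)⁻¹) (Ici 0)) {r : ℝ} {u v : ℝ → E}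
    (h : IsViscoelasticMode b g r u v) (ht : 0 ≤ t) :
    ‖u t‖ + ‖v t‖ / (b t + g t * r ^ 2) ≤
      exp (∫ s in Ici 0, (g s)⁻¹) * (‖u 0‖ + ‖v 0‖ / (b 0 + g 0 * r ^ 2)) := by
  have hsub : Icc 0 t ⊆ Ici 0 := Icc_subset_Ici_self
  have ha_pos : ∀ s ∈ Ici 0, 0 < b s + g s * r ^ 2 := fun s hs => by
    have := hb.pos hs
    have := hg.pos hs
    positivity
  have ha_deriv : ∀ s ∈ Icc 0 t, HasDerivWithinAt (fun s => b s + g s * r ^ 2)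
      (derivWithin b (Icc 0 t) s + derivWithin g (Icc 0 t) s * r ^ 2) (Icc 0 t) s := fun s hs =>
    (hb.differentiableOn.mono hsub s hs).hasDerivWithinAt.add
      ((hg.differentiableOn.mono hsub s hs).hasDerivWithinAt.mul_const _)
  have hrate : ∀ s ∈ Icc 0 t, |r ^ 2| ≤ (g s)⁻¹ * (b s + g s * r ^ 2) := fun s hs => by
    have hgs := hg.pos hs.1
    rw [abs_of_nonneg (sq_nonneg r), ← div_eq_inv_mul, le_div_iff₀ hgs]
    linarith [hb.pos hs.1]
  have hκ : ContinuousOn (fun s => (g s)⁻¹) (Icc 0 t) :=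
    (hg.differentiableOn.continuousOn.mono hsub).inv₀ fun s hs => (hg.pos hs.1).ne'
  refine ((h.mono hsub).norm_add_norm_div_le continuousOn_const hκ ha_deriv
    (fun s hs => ha_pos s (hsub hs)) (fun s _ => ?_) hrate (right_mem_Icc.2 ht)).trans ?_
  · have := (hb.monotoneOn.mono hsub).derivWithin_nonneg (x := s)
    have := (hg.monotoneOn.mono hsub).derivWithin_nonneg (x := s)
    positivity
  · have := ha_pos 0 self_mem_Ici
    gcongr
    exact hg.integral_inv_le_integral_Ici hg_int ht

lemma add_div_le_inv_min_mul {β γ : ℝ} (hβ : 0 < β) (hγ : 0 < γ) (r : ℝ) {x y : ℝ} (hx : 0 ≤ x)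
    (hy : 0 ≤ y) :
    x + y / (β + γ * r ^ 2) ≤ (min 1 (min β γ))⁻¹ * (x + (1 + r ^ 2)⁻¹ * y) := by
  set m := min 1 (min β γ)
  have hm : 0 < m := by positivity
  have hm_one : m ≤ 1 := min_le_left _ _
  have hmβ : m ≤ β := (min_le_right _ _).trans (min_le_left _ _)
  have hmγ : m ≤ γ := (min_le_right _ _).trans (min_le_right _ _)
  calc x + y / (β + γ * r ^ 2) ≤ x / m + y / (m + m * r ^ 2) := by
        gcongr
        exact le_div_self hx hm hm_one
    _ = m⁻¹ * (x + (1 + r ^ 2)⁻¹ * y) := by field_simp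

theorem exists_norm_add_norm_div_le_of_isViscoelasticMode
    (hb : IsDampingCoefficient b) (hg : IsDampingCoefficient g)
    (hg_int : IntegrableOn (fun s => (g s)⁻¹) (Ici 0)) :
    ∃ C : ℝ, 0 < C ∧ ∀ (r : ℝ) (u v : ℝ → E), IsViscoelasticMode b g r u v → ∀ t, 0 ≤ t →
      ‖u t‖ + ‖v t‖ / (b t + g t * r ^ 2) ≤ C * (‖u 0‖ + (1 + r ^ 2)⁻¹ * ‖v 0‖) := by
  have hb₀ := hb.pos_zero
  have hg₀ := hg.pos_zero
  refine ⟨exp (∫ s in Ici 0, (g s)⁻¹) * (min 1 (min (b 0) (g 0)))⁻¹, by positivity,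
    fun r u v h t ht => ?_⟩
  refine (h.norm_add_norm_div_le_exp_integral_inv hb hg hg_int ht).trans ?_
  rw [mul_assoc]
  gcongr
  exact add_div_le_inv_min_mul hb₀ hg₀ r (norm_nonneg _) (norm_nonneg _)

end Mode

section Sobolev

open Set Real Topology

lemma sqrt_add_le_sqrt_add_sqrt {x y : ℝ} (hx : 0 ≤ x) (hy : 0 ≤ y) : √(x + y) ≤ √x + √y := by
  simpa only [sqrt_eq_rpow] using rpow_add_le_add_rpow hx hy (by norm_num) (by norm_num)

lemma integrable_and_sqrt_integral_le_add {α : Type*} [MeasurableSpace α] {μ : Measure α}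
    {F f₁ f₂ : α → ℝ} {c₁ c₂ : ℝ} (hc₁ : 0 ≤ c₁) (hc₂ : 0 ≤ c₂)
    (hF_meas : AEStronglyMeasurable F μ) (hF : 0 ≤ F)
    (hf₁_int : Integrable f₁ μ) (hf₁ : 0 ≤ f₁) (hf₂_int : Integrable f₂ μ) (hf₂ : 0 ≤ f₂)
    (hle : ∀ᵐ x ∂μ, F x ≤ c₁ ^ 2 * f₁ x + c₂ ^ 2 * f₂ x) :
    Integrable F μ ∧ √(∫ x, F x ∂μ) ≤ c₁ * √(∫ x, f₁ x ∂μ) + c₂ * √(∫ x, f₂ x ∂μ) := by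
  have h₁ := hf₁_int.const_mul (c₁ ^ 2)
  have h₂ := hf₂_int.const_mul (c₂ ^ 2)
  have hF_int : Integrable F μ := (h₁.add h₂).mono' hF_meas <| by
    filter_upwards [hle] with x hx
    rwa [norm_of_nonneg (hF x)]
  have hI₁ : 0 ≤ ∫ x, f₁ x ∂μ := integral_nonneg hf₁
  have hI₂ : 0 ≤ ∫ x, f₂ x ∂μ := integral_nonneg hf₂
  refine ⟨hF_int, ?_⟩
  calc √(∫ x, F x ∂μ) ≤ √(c₁ ^ 2 * ∫ x, f₁ x ∂μ + c₂ ^ 2 * ∫ x, f₂ x ∂μ) := by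
        rw [← integral_const_mul, ← integral_const_mul, ← integral_add h₁ h₂]
        exact sqrt_le_sqrt (integral_mono_ae hF_int (h₁.add h₂) hle)
    _ ≤ √(c₁ ^ 2 * ∫ x, f₁ x ∂μ) + √(c₂ ^ 2 * ∫ x, f₂ x ∂μ) :=
        sqrt_add_le_sqrt_add_sqrt (by positivity) (by positivity)
    _ = c₁ * √(∫ x, f₁ x ∂μ) + c₂ * √(∫ x, f₂ x ∂μ) := by
        rw [sqrt_mul (sq_nonneg _), sqrt_mul (sq_nonneg _), sqrt_sq hc₁, sqrt_sq hc₂]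

lemma aestronglyMeasurable_of_hasDerivWithinAt_Ici {α E : Type*} [MeasurableSpace α]
    {μ : Measure α} [NormedAddCommGroup E] [NormedSpace ℝ E] {u : ℝ → α → E} {f : α → E} {t : ℝ}
    (hu_meas : ∀ τ, t ≤ τ → AEStronglyMeasurable (u τ) μ)
    (hu : ∀ ξ, HasDerivWithinAt (fun τ => u τ ξ) (f ξ) (Ici t) t) : AEStronglyMeasurable f μ := by
  obtain ⟨τ, -, hτ_gt, hτ⟩ := exists_seq_strictAnti_tendsto t
  have hτ_within : Tendsto τ atTop (𝓝[Ici t \ {t}] t) :=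
    tendsto_nhdsWithin_iff.2 ⟨hτ, .of_forall fun n => ⟨(hτ_gt n).le, (hτ_gt n).ne'⟩⟩
  refine aestronglyMeasurable_of_tendsto_ae atTop
    (f := fun n ξ => slope (fun τ => u τ ξ) t (τ n)) (fun n => ?_)
    (.of_forall fun ξ => (hasDerivWithinAt_iff_tendsto_slope.1 (hu ξ)).comp hτ_within)
  simp only [slope_def_module]
  exact ((hu_meas _ (hτ_gt n).le).sub (hu_meas t le_rfl)).const_smul _

variable {V E : Type*} [NormedAddCommGroup V] [NormedAddCommGroup E] {s : ℝ} {f u₀ u₁ : V → E}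

/-- The integrand of the squared norm of `f` in the homogeneous Sobolev space of order `s`, on the
Fourier side. -/
noncomputable def sobolevDensity (s : ℝ) (f : V → E) (ξ : V) : ℝ :=
  ‖ξ‖ ^ (2 * s) * ‖f ξ‖ ^ 2

/-- The analogue of `sobolevDensity` for the initial velocity `f`, weighted by `⟨ξ⟩⁻⁴`. -/
noncomputable def velocityDensity (s : ℝ) (f : V → E) (ξ : V) : ℝ :=
  ‖ξ‖ ^ (2 * s) * ((1 + ‖ξ‖ ^ 2) ^ 2)⁻¹ * ‖f ξ‖ ^ 2

/-- The joint density of the Cauchy data `(u₀, u₁)` at Sobolev order `s`. -/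
noncomputable def cauchyDensity (s : ℝ) (u₀ u₁ : V → E) (ξ : V) : ℝ :=
  sobolevDensity s u₀ ξ + velocityDensity s u₁ ξ

lemma sobolevDensity_nonneg (s : ℝ) (f : V → E) : 0 ≤ sobolevDensity s f := fun ξ => by
  simp only [sobolevDensity, Pi.zero_apply]; positivity

lemma velocityDensity_nonneg (s : ℝ) (f : V → E) : 0 ≤ velocityDensity s f := fun ξ => by
  simp only [velocityDensity, Pi.zero_apply]; positivity

lemma cauchyDensity_nonneg (s : ℝ) (u₀ u₁ : V → E) : 0 ≤ cauchyDensity s u₀ u₁ := fun ξ =>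
  add_nonneg (sobolevDensity_nonneg s u₀ ξ) (velocityDensity_nonneg s u₁ ξ)

lemma cauchyDensity_add_two {ξ : V} (hξ : ξ ≠ 0) (s : ℝ) (u₀ u₁ : V → E) :
    cauchyDensity (s + 2) u₀ u₁ ξ = ‖ξ‖ ^ 4 * cauchyDensity s u₀ u₁ ξ := by
  have hpow : ‖ξ‖ ^ (2 * (s + 2)) = ‖ξ‖ ^ (2 * s) * ‖ξ‖ ^ 4 := by
    rw [← rpow_add_natCast (norm_ne_zero_iff.2 hξ)]
    congr 1
    push_cast
    ring
  simp only [cauchyDensity, sobolevDensity, velocityDensity, hpow]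
  ring

lemma sobolevDensity_le_mul_cauchyDensity {c : ℝ} {ξ : V}
    (hf : ‖f ξ‖ ≤ c * (‖u₀ ξ‖ + (1 + ‖ξ‖ ^ 2)⁻¹ * ‖u₁ ξ‖)) :
    sobolevDensity s f ξ ≤ 2 * c ^ 2 * cauchyDensity s u₀ u₁ ξ :=
  calc ‖ξ‖ ^ (2 * s) * ‖f ξ‖ ^ 2
      ≤ ‖ξ‖ ^ (2 * s) * (c ^ 2 * (2 * (‖u₀ ξ‖ ^ 2 + ((1 + ‖ξ‖ ^ 2)⁻¹ * ‖u₁ ξ‖) ^ 2))) := by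
        gcongr
        refine (pow_le_pow_left₀ (norm_nonneg _) hf 2).trans ?_
        rw [mul_pow]
        gcongr
        exact add_sq_le
    _ = 2 * c ^ 2 * cauchyDensity s u₀ u₁ ξ := by
        simp only [cauchyDensity, sobolevDensity, velocityDensity, mul_pow, inv_pow]
        ring

variable [MeasurableSpace V] {μ : Measure V}

/-- The size of the Cauchy data `(u₀, u₁)` at Sobolev order `s`: the norm of `u₀` of order `s` plus
that of `u₁` with the additional weight `⟨ξ⟩⁻²`. -/
noncomputable def cauchyDataNorm (μ : Measure V) (s : ℝ) (u₀ u₁ : V → E) : ℝ :=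
  √(∫ ξ, sobolevDensity s u₀ ξ ∂μ) + √(∫ ξ, velocityDensity s u₁ ξ ∂μ)

/-- The Cauchy data `(u₀, u₁)` have finite size at Sobolev order `s`; for other data
`cauchyDataNorm` is a junk value. -/
structure HasFiniteCauchyData (μ : Measure V) (s : ℝ) (u₀ u₁ : V → E) : Prop where
  position : Integrable (sobolevDensity s u₀) μ
  velocity : Integrable (velocityDensity s u₁) μ

lemma HasFiniteCauchyData.integrable_cauchyDensity (h : HasFiniteCauchyData μ s u₀ u₁) :
    Integrable (cauchyDensity s u₀ u₁) μ :=
  h.position.add h.velocity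

lemma HasFiniteCauchyData.sqrt_integral_cauchyDensity_le (h : HasFiniteCauchyData μ s u₀ u₁) :
    √(∫ ξ, cauchyDensity s u₀ u₁ ξ ∂μ) ≤ cauchyDataNorm μ s u₀ u₁ := by
  simp only [cauchyDensity, integral_add h.position h.velocity]
  exact sqrt_add_le_sqrt_add_sqrt (integral_nonneg (sobolevDensity_nonneg s u₀))
    (integral_nonneg (velocityDensity_nonneg s u₁))

variable [OpensMeasurableSpace V]

lemma aestronglyMeasurable_sobolevDensity (s : ℝ) (hf : AEStronglyMeasurable f μ) :
    AEStronglyMeasurable (sobolevDensity s f) μ :=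
  (measurable_norm.pow_const _).aestronglyMeasurable.mul (hf.norm.pow 2)

theorem integrable_and_sqrt_integral_sobolevDensity_le {C : ℝ} (hC : 0 ≤ C)
    (h : HasFiniteCauchyData μ s u₀ u₁) (hf_meas : AEStronglyMeasurable f μ)
    (hf : ∀ ξ, ‖f ξ‖ ≤ C * (‖u₀ ξ‖ + (1 + ‖ξ‖ ^ 2)⁻¹ * ‖u₁ ξ‖)) :
    Integrable (sobolevDensity s f) μ ∧
      √(∫ ξ, sobolevDensity s f ξ ∂μ) ≤ 2 * C * cauchyDataNorm μ s u₀ u₁ := by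
  rw [cauchyDataNorm, mul_add]
  refine integrable_and_sqrt_integral_le_add (by positivity) (by positivity)
    (aestronglyMeasurable_sobolevDensity s hf_meas) (sobolevDensity_nonneg s f)
    h.position (sobolevDensity_nonneg s u₀) h.velocity (velocityDensity_nonneg s u₁)
    (.of_forall fun ξ => ?_)
  calc sobolevDensity s f ξ ≤ 2 * C ^ 2 * cauchyDensity s u₀ u₁ ξ :=
        sobolevDensity_le_mul_cauchyDensity (hf ξ)
    _ ≤ (2 * C) ^ 2 * cauchyDensity s u₀ u₁ ξ := by
        gcongr
        · exact cauchyDensity_nonneg s u₀ u₁ ξ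
        · linarith [sq_nonneg C]
    _ = _ := mul_add _ _ _

theorem integrable_and_sqrt_integral_sobolevDensity_le_add [NullSingletonClass μ] {C β γ : ℝ}
    (hC : 0 ≤ C) (hβ : 0 ≤ β) (hγ : 0 ≤ γ) (h : HasFiniteCauchyData μ s u₀ u₁)
    (h_two : HasFiniteCauchyData μ (s + 2) u₀ u₁) (hf_meas : AEStronglyMeasurable f μ)
    (hf : ∀ ξ, ‖f ξ‖ ≤ C * (β + γ * ‖ξ‖ ^ 2) * (‖u₀ ξ‖ + (1 + ‖ξ‖ ^ 2)⁻¹ * ‖u₁ ξ‖)) :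
    Integrable (sobolevDensity s f) μ ∧
      √(∫ ξ, sobolevDensity s f ξ ∂μ) ≤
        2 * C * γ * cauchyDataNorm μ (s + 2) u₀ u₁ + 2 * C * β * cauchyDataNorm μ s u₀ u₁ := by
  have hle : ∀ᵐ ξ ∂μ, sobolevDensity s f ξ ≤
      (2 * C * γ) ^ 2 * cauchyDensity (s + 2) u₀ u₁ ξ +
        (2 * C * β) ^ 2 * cauchyDensity s u₀ u₁ ξ := by
    filter_upwards [measure_eq_zero_iff_ae_notMem.1 (measure_singleton (μ := μ) 0)] with ξ hξ
    have hD : 0 ≤ cauchyDensity s u₀ u₁ ξ := cauchyDensity_nonneg s u₀ u₁ ξ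
    rw [cauchyDensity_add_two hξ]
    calc sobolevDensity s f ξ
        ≤ 2 * (C * (β + γ * ‖ξ‖ ^ 2)) ^ 2 * cauchyDensity s u₀ u₁ ξ :=
          sobolevDensity_le_mul_cauchyDensity (hf ξ)
      _ ≤ 2 * (C ^ 2 * (2 * (β ^ 2 + (γ * ‖ξ‖ ^ 2) ^ 2))) * cauchyDensity s u₀ u₁ ξ := by
          rw [mul_pow C]
          gcongr
          exact add_sq_le
      _ = _ := by ring
  obtain ⟨hf_int, hbound⟩ := integrable_and_sqrt_integral_le_add
    (by positivity) (by positivity) (aestronglyMeasurable_sobolevDensity s hf_meas)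
    (sobolevDensity_nonneg s f) h_two.integrable_cauchyDensity (cauchyDensity_nonneg _ _ _)
    h.integrable_cauchyDensity (cauchyDensity_nonneg _ _ _) hle
  refine ⟨hf_int, hbound.trans ?_⟩
  gcongr
  exacts [h_two.sqrt_integral_cauchyDensity_le, h.sqrt_integral_cauchyDensity_le]

theorem overdamping_increasing_viscoelastic_estimates_general [NormedSpace ℝ E]
    [NullSingletonClass μ] {b g : ℝ → ℝ} (hb : IsDampingCoefficient b)
    (hg : IsDampingCoefficient g) (hg_int : IntegrableOn (fun t => (g t)⁻¹) (Ici 0)) :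
    ∃ C : ℝ, 0 < C ∧ ∀ (s : ℝ) (u v : ℝ → V → E),
      (∀ t, 0 ≤ t → AEStronglyMeasurable (u t) μ) →
      (∀ ξ, IsViscoelasticMode b g ‖ξ‖ (fun t => u t ξ) (fun t => v t ξ)) →
      HasFiniteCauchyData μ s (u 0) (v 0) → ∀ t, 0 ≤ t →
        (Integrable (sobolevDensity s (u t)) μ ∧
          √(∫ ξ, sobolevDensity s (u t) ξ ∂μ) ≤ C * cauchyDataNorm μ s (u 0) (v 0)) ∧
        (HasFiniteCauchyData μ (s + 2) (u 0) (v 0) →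
          Integrable (sobolevDensity s (v t)) μ ∧
            √(∫ ξ, sobolevDensity s (v t) ξ ∂μ) ≤
              C * g t * cauchyDataNorm μ (s + 2) (u 0) (v 0) +
                C * b t * cauchyDataNorm μ s (u 0) (v 0)) := by
  obtain ⟨C, hC, hmode⟩ := exists_norm_add_norm_div_le_of_isViscoelasticMode (E := E) hb hg hg_int
  refine ⟨2 * C, by positivity, fun s u v hu_meas h h_data t ht => ?_⟩
  have hbt := hb.pos ht
  have hgt := hg.pos ht
  have hv_meas : AEStronglyMeasurable (v t) μ :=
    aestronglyMeasurable_of_hasDerivWithinAt_Ici (fun τ hτ => hu_meas τ (ht.trans hτ))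
      fun ξ => ((h ξ).hasDerivWithinAt t ht).mono (Ici_subset_Ici.2 ht)
  have hbound := fun ξ => hmode _ _ _ (h ξ) t ht
  refine ⟨integrable_and_sqrt_integral_sobolevDensity_le hC.le h_data (hu_meas t ht) fun ξ => ?_,
    fun h_data_two => integrable_and_sqrt_integral_sobolevDensity_le_add hC.le hbt.le hgt.le
      h_data h_data_two hv_meas fun ξ => ?_⟩
  · exact (le_add_of_nonneg_right (by positivity)).trans (hbound ξ)
  · rw [mul_right_comm, ← div_le_iff₀ (by positivity)]
    exact (le_add_of_nonneg_left (norm_nonneg _)).trans (hbound ξ)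

end Sobolev

/-- Theorem 5.1 of the paper: over-damping producing friction together with an
increasing viscoelastic coefficient `g = g(t)`. -/
theorem overdamping_increasing_viscoelastic_estimates
    (n : ℕ) (hn : 1 ≤ n)
    (b g G : ℝ → ℝ)
    (hb_smooth : ContDiff ℝ 2 b)
    (hb_pos : ∀ t : ℝ, 0 ≤ t → 0 < b t)
    (hb_deriv_pos : ∀ t : ℝ, 0 ≤ t → 0 < deriv b t)
    (Cb : ℝ) (hCb : 0 < Cb)
    (hb1 : ∀ t : ℝ, 0 ≤ t → |deriv b t| ≤ Cb * b t / (1 + t))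
    (hb2 : ∀ t : ℝ, 0 ≤ t → |deriv (deriv b) t| ≤ Cb * b t / (1 + t) ^ 2)
    (hb_int : IntegrableOn (fun t => (b t)⁻¹) (Set.Ici (0 : ℝ)))
    (hb_small : ∀ ε : ℝ, 0 < ε → ∃ T : ℝ, ∀ t : ℝ, T ≤ t → |deriv b t| ≤ ε * (b t) ^ 2)
    (hg_smooth : ContDiff ℝ 2 g)
    (hg_pos : ∀ t : ℝ, 0 ≤ t → 0 < g t)
    (hg_deriv_pos : ∀ t : ℝ, 0 ≤ t → 0 < deriv g t)
    (hg_int : IntegrableOn (fun t => (g t)⁻¹) (Set.Ici (0 : ℝ)))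
    (hG : ∀ t : ℝ, G t = (1 / 2) * ∫ τ in (0 : ℝ)..t, g τ)
    (C₁ C₂ : ℝ) (hC₁ : 0 < C₁) (hC₂ : 0 < C₂)
    (hg1 : ∀ t : ℝ, 0 < t → |deriv g t| ≤ C₁ * (g t) ^ 2 / G t)
    (hg2 : ∀ t : ℝ, 0 < t → |deriv (deriv g) t| ≤ C₂ * (g t) ^ 3 / (G t) ^ 2) :
    ∀ σ : ℝ, 0 ≤ σ →
      ∃ C' : ℝ, 0 < C' ∧
        ∀ (uh : ℝ → EuclideanSpace ℝ (Fin n) → ℂ) (u₀ u₁ : EuclideanSpace ℝ (Fin n) → ℂ),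
          Measurable (fun p : ℝ × EuclideanSpace ℝ (Fin n) => uh p.1 p.2) →
          (∀ ξ : EuclideanSpace ℝ (Fin n), ContDiff ℝ 2 (fun s => uh s ξ)) →
          (∀ (ξ : EuclideanSpace ℝ (Fin n)) (t : ℝ), 0 ≤ t →
            deriv (deriv (fun s => uh s ξ)) t + ((‖ξ‖ ^ 2 : ℝ) : ℂ) * uh t ξ +
              ((b t + g t * ‖ξ‖ ^ 2 : ℝ) : ℂ) * deriv (fun s => uh s ξ) t = 0) →
          (∀ ξ : EuclideanSpace ℝ (Fin n), uh 0 ξ = u₀ ξ) →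
          (∀ ξ : EuclideanSpace ℝ (Fin n), deriv (fun s => uh s ξ) 0 = u₁ ξ) →
          ∀ t : ℝ, 0 ≤ t →
            Integrable (fun ξ : EuclideanSpace ℝ (Fin n) => ‖ξ‖ ^ (2 * σ) * ‖u₀ ξ‖ ^ 2) →
            Integrable (fun ξ : EuclideanSpace ℝ (Fin n) => ‖ξ‖ ^ (2 * σ) * ((1 + ‖ξ‖ ^ 2) ^ 2)⁻¹ * ‖u₁ ξ‖ ^ 2) →
            Integrable (fun ξ : EuclideanSpace ℝ (Fin n) => ‖ξ‖ ^ (2 * (σ + 2)) * ‖u₀ ξ‖ ^ 2) →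
            Integrable (fun ξ : EuclideanSpace ℝ (Fin n) => ‖ξ‖ ^ (2 * (σ + 2)) * ((1 + ‖ξ‖ ^ 2) ^ 2)⁻¹ * ‖u₁ ξ‖ ^ 2) →
            Real.sqrt (∫ ξ : EuclideanSpace ℝ (Fin n), ‖ξ‖ ^ (2 * σ) * ‖uh t ξ‖ ^ 2) ≤
                C' * (Real.sqrt (∫ ξ : EuclideanSpace ℝ (Fin n), ‖ξ‖ ^ (2 * σ) * ‖u₀ ξ‖ ^ 2) + Real.sqrt (∫ ξ : EuclideanSpace ℝ (Fin n), ‖ξ‖ ^ (2 * σ) * ((1 + ‖ξ‖ ^ 2) ^ 2)⁻¹ * ‖u₁ ξ‖ ^ 2)) ∧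
              Real.sqrt (∫ ξ : EuclideanSpace ℝ (Fin n), ‖ξ‖ ^ (2 * σ) * ‖deriv (fun s => uh s ξ) t‖ ^ 2) ≤
                C' * g t * (Real.sqrt (∫ ξ : EuclideanSpace ℝ (Fin n), ‖ξ‖ ^ (2 * (σ + 2)) * ‖u₀ ξ‖ ^ 2) + Real.sqrt (∫ ξ : EuclideanSpace ℝ (Fin n), ‖ξ‖ ^ (2 * (σ + 2)) * ((1 + ‖ξ‖ ^ 2) ^ 2)⁻¹ * ‖u₁ ξ‖ ^ 2)) +
                  C' * b t * (Real.sqrt (∫ ξ : EuclideanSpace ℝ (Fin n), ‖ξ‖ ^ (2 * σ) * ‖u₀ ξ‖ ^ 2) + Real.sqrt (∫ ξ : EuclideanSpace ℝ (Fin n), ‖ξ‖ ^ (2 * σ) * ((1 + ‖ξ‖ ^ 2) ^ 2)⁻¹ * ‖u₁ ξ‖ ^ 2)) := by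
  intro σ _
  have : NeZero n := ⟨by lia⟩
  obtain ⟨C, hC, hmain⟩ := overdamping_increasing_viscoelastic_estimates_general
    (μ := (volume : Measure (EuclideanSpace ℝ (Fin n)))) (E := ℂ)
    (.of_deriv_nonneg (hb_smooth.differentiable two_ne_zero) (hb_pos 0 le_rfl)
      fun t ht => (hb_deriv_pos t ht.le).le)
    (.of_deriv_nonneg (hg_smooth.differentiable two_ne_zero) (hg_pos 0 le_rfl)
      fun t ht => (hg_deriv_pos t ht.le).le) hg_int
  refine ⟨C, hC, fun uh u₀ u₁ h_meas h_smooth h_ode h_u₀ h_u₁ t ht h₀ h₁ h₀_two h₁_two => ?_⟩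
  obtain rfl : uh 0 = u₀ := funext h_u₀
  obtain rfl : (fun ξ => deriv (fun s => uh s ξ) 0) = u₁ := funext h_u₁
  have hest := hmain σ uh (fun t ξ => deriv (fun s => uh s ξ) t)
    (fun t _ => (h_meas.comp measurable_prodMk_left).aestronglyMeasurable)
    (fun ξ => .of_deriv ((h_smooth ξ).differentiable two_ne_zero)
      (h_smooth ξ).differentiable_deriv_two
      (by simpa only [Complex.real_smul, Set.mem_Ici] using h_ode ξ))
    ⟨h₀, h₁⟩ t ht
  exact ⟨hest.1.2, (hest.2 ⟨h₀_two, h₁_two⟩).2⟩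
end

section
/- Let n ≥ 1 and take the explicit coefficients b(t) = e^{e^t} and g(t) = 2e^{−t} (so b(t)g(t) ≥ 2 for all t ≥ 0). Then for every real σ ≥ 2 there is a constant C > 0 such that every Fourier solution û with data û₀, û₁ satisfies for all t ≥ 0 (whenever the data integrals are finite): (∫_{ℝⁿ} |ξ|^{2σ}|û(t,ξ)|² dξ)^{1/2} ≤ C [ (∫ |ξ|^{2σ}|û₀(ξ)|² dξ)^{1/2} + (∫ |ξ|^{2(σ−2)}|û₁(ξ)|² dξ)^{1/2} ] and (∫ |ξ|^{2σ}|∂ₜû(t,ξ)|² dξ)^{1/2} ≤ C b(t) [ (∫ |ξ|^{2σ}|û₀|² dξ)^{1/2} + (∫ |ξ|^{2(σ−2)}|û₁|² dξ)^{1/2} ] + C g(t) [ (∫ |ξ|^{2(σ+2)}|û₀|² dξ)^{1/2} + (∫ |ξ|^{2σ}|û₁|² dξ)^{1/2} ]. -/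
open MeasureTheory Filter

/-!
At a fixed frequency the equation is a damped oscillator `y'' + κ y + a y' = 0` with `κ = ‖ξ‖²` and
`a = b + κ g`. As long as `κ + |a'| ≤ a² / 2`, the elliptic WKB splitting separates `y` from
the fast mode `w = (2 / a) (y' + (κ / a) y)`: the pair `(y, w)` solves a first-order system whose
damping dominates its coupling in the `ℓ¹` sense, so `‖y‖ + ‖w‖` does not increase. This
controls `y` by `‖y 0‖ + ‖y' 0‖ / a 0`, and `y'` by `a` times the same quantity. Since
`κ / a 0 ≤ 1 / g 0`, Minkowski's inequality turns these pointwise bounds into the weighted `L²`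
estimates. For `a = b + κ g` the slow-variation condition holds for every `κ ≥ 0` as soon as
`|b'| ≤ b² / 2` and `1 + |g'| ≤ b g`.
-/

open Set Topology

section NormDissipation

variable {F G : Type*} [NormedAddCommGroup F] [NormedSpace ℝ F]
  [NormedAddCommGroup G] [NormedSpace ℝ G]

/- Only the triangle inequality is used: `‖(1 - h p) f x + h v‖ ≤ (1 - h p) ‖f x‖ + h ‖v‖` for small
`h > 0`, so the norm need not be differentiable. -/
theorem eventually_slope_norm_lt {f : ℝ → F} {v : F} {p x r : ℝ}
    (hf : HasDerivWithinAt f (-p • f x + v) (Ici x) x) (hr : -p * ‖f x‖ + ‖v‖ < r) :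
    ∀ᶠ z in 𝓝[>] x, slope (fun z => ‖f z‖) x z < r := by
  have hslope : Tendsto (slope f x) (𝓝[>] x) (𝓝 (-p • f x + v)) :=
    (hasDerivWithinAt_iff_tendsto_slope' (lt_irrefl x)).1 hf.Ioi_of_Ici
  have herror : ∀ᶠ z in 𝓝[>] x, ‖slope f x z - (-p • f x + v)‖ < r - (-p * ‖f x‖ + ‖v‖) := by
    simpa only [dist_eq_norm] using Metric.tendsto_nhds.1 hslope _ (sub_pos.2 hr)
  have hstep : ∀ᶠ z in 𝓝[>] x, 0 < 1 - (z - x) * p := by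
    have hcont : Continuous fun z : ℝ => 1 - (z - x) * p := by fun_prop
    exact ((hcont.tendsto x).mono_left nhdsWithin_le_nhds).eventually_const_lt (by simp)
  filter_upwards [herror, hstep, self_mem_nhdsWithin] with z herror hstep hz
  have hz : 0 < z - x := sub_pos.2 hz
  have hfz : f z = (z - x) • (slope f x z - (-p • f x + v)) +
      ((1 - (z - x) * p) • f x + (z - x) • v) := by
    have hslope_eq : (z - x) • slope f x z = f z - f x := sub_smul_slope f x z
    rw [smul_sub, hslope_eq]
    module
  have hnorm : ‖f z‖ ≤ (z - x) * ‖slope f x z - (-p • f x + v)‖ +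
      ((1 - (z - x) * p) * ‖f x‖ + (z - x) * ‖v‖) := by
    rw [← norm_smul_of_nonneg hz.le, ← norm_smul_of_nonneg hz.le, ← norm_smul_of_nonneg hstep.le]
    exact hfz ▸ norm_add_le_of_le le_rfl (norm_add_le _ _)
  rw [slope_def_field, div_lt_iff₀ hz]
  nlinarith

theorem norm_add_norm_le_of_dissipative {f u : ℝ → F} {g v : ℝ → G} {p q : ℝ → ℝ} {s t : ℝ}
    (hst : s ≤ t) (hfc : ContinuousOn f (Icc s t)) (hgc : ContinuousOn g (Icc s t))
    (hf : ∀ x ∈ Ico s t, HasDerivWithinAt f (-p x • f x + u x) (Ici x) x)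
    (hg : ∀ x ∈ Ico s t, HasDerivWithinAt g (-q x • g x + v x) (Ici x) x)
    (hdiss : ∀ x ∈ Ico s t, ‖u x‖ + ‖v x‖ ≤ p x * ‖f x‖ + q x * ‖g x‖) :
    ‖f t‖ + ‖g t‖ ≤ ‖f s‖ + ‖g s‖ := by
  refine image_le_of_liminf_slope_right_le_deriv_boundary (f := fun x => ‖f x‖ + ‖g x‖)
    (B := fun _ => ‖f s‖ + ‖g s‖) (B' := 0) (hfc.norm.add hgc.norm) le_rfl continuousOn_const
    (fun x _ => hasDerivWithinAt_const x _ _) (fun x hx r hr => ?_) (right_mem_Icc.2 hst)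
  have hr : 0 < r := hr
  have hfr : -p x * ‖f x‖ + ‖u x‖ < -p x * ‖f x‖ + ‖u x‖ + r / 2 := by linarith
  have hgr : -q x * ‖g x‖ + ‖v x‖ < -q x * ‖g x‖ + ‖v x‖ + r / 2 := by linarith
  refine Eventually.frequently ?_
  filter_upwards [eventually_slope_norm_lt (hf x hx) hfr, eventually_slope_norm_lt (hg x hx) hgr]
    with z hfz hgz
  have hadd : slope (fun x => ‖f x‖ + ‖g x‖) x z =
      slope (fun x => ‖f x‖) x z + slope (fun x => ‖g x‖) x z := by
    simp only [slope_def_field]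
    ring
  linarith [hdiss x hx]

end NormDissipation

section SingleFrequency

variable {F : Type*} [NormedAddCommGroup F] [NormedSpace ℝ F]

/-- `y` solves the damped oscillator `y'' + κ y + a y' = 0` on `[0, ∞)`, with a damping `a` which is
large compared with the stiffness `κ` and varies slowly on its own time scale `1 / a`, so that the
elliptic WKB analysis applies uniformly. -/
structure IsOverdampedOscillation (κ : ℝ) (a : ℝ → ℝ) (y : ℝ → F) : Prop where
  stiffness_nonneg : 0 ≤ κ
  damping_pos : ∀ t, 0 ≤ t → 0 < a t
  differentiableAt_damping : ∀ t, 0 ≤ t → DifferentiableAt ℝ a t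
  stiffness_add_abs_deriv_damping_le : ∀ t, 0 ≤ t → κ + |deriv a t| ≤ a t ^ 2 / 2
  differentiableAt : ∀ t, 0 ≤ t → DifferentiableAt ℝ y t
  hasDerivAt_deriv : ∀ t, 0 ≤ t → HasDerivAt (deriv y) (-(κ • y t + a t • deriv y t)) t

/-- The deviation of `y` from the slow WKB mode `y' = -(κ / a) y`, in units of `a / 2`. The
factor `2` balances the coupling between `y` and the fast mode. -/
noncomputable def fastMode (κ : ℝ) (a : ℝ → ℝ) (y : ℝ → F) (t : ℝ) : F :=
  (2 / a t) • (deriv y t + (κ / a t) • y t)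

namespace IsOverdampedOscillation

variable {κ : ℝ} {a : ℝ → ℝ} {y : ℝ → F} {t : ℝ}

theorem hasDerivAt (h : IsOverdampedOscillation κ a y) (ht : 0 ≤ t) :
    HasDerivAt y (-(κ / a t) • y t + (a t / 2) • fastMode κ a y t) t := by
  have ha := (h.damping_pos t ht).ne'
  refine (h.differentiableAt t ht).hasDerivAt.congr_deriv ?_
  rw [fastMode]
  match_scalars <;> field_simp
  ring

theorem hasDerivAt_fastMode (h : IsOverdampedOscillation κ a y) (ht : 0 ≤ t) :
    HasDerivAt (fastMode κ a y)
      (-(a t - κ / a t + deriv a t / a t) • fastMode κ a y t +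
        (-(2 * κ * (deriv a t + κ) / a t ^ 3)) • y t) t := by
  have ha := (h.damping_pos t ht).ne'
  have hdiv (c : ℝ) : HasDerivAt (fun s => c / a s) (-(c * deriv a t) / a t ^ 2) t :=
    (((hasDerivAt_const t c).fun_div (h.differentiableAt_damping t ht).hasDerivAt ha)).congr_deriv
      (by ring)
  refine ((hdiv 2).fun_smul ((h.hasDerivAt_deriv t ht).fun_add
    ((hdiv κ).fun_smul (h.differentiableAt t ht).hasDerivAt))).congr_deriv ?_
  rw [fastMode]
  match_scalars <;> field_simp <;> ring

theorem coupling_le_damping (h : IsOverdampedOscillation κ a y) (ht : 0 ≤ t) :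
    ‖(a t / 2) • fastMode κ a y t‖ + ‖(-(2 * κ * (deriv a t + κ) / a t ^ 3)) • y t‖ ≤
      κ / a t * ‖y t‖ + (a t - κ / a t + deriv a t / a t) * ‖fastMode κ a y t‖ := by
  have ha := h.damping_pos t ht
  have hκ := h.stiffness_nonneg
  have hslow := h.stiffness_add_abs_deriv_damping_le t ht
  have hfast : a t / 2 ≤ a t - κ / a t + deriv a t / a t := by
    have : 0 ≤ (a t ^ 2 / 2 - κ + deriv a t) / a t :=
      div_nonneg (by linarith [neg_abs_le (deriv a t)]) ha.le
    field_simp at this ⊢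
    linarith
  have hslowMode : |-(2 * κ * (deriv a t + κ) / a t ^ 3)| ≤ κ / a t := by
    have habs : |deriv a t + κ| ≤ a t ^ 2 / 2 := by
      linarith [abs_add_le (deriv a t) κ, abs_of_nonneg hκ]
    calc |-(2 * κ * (deriv a t + κ) / a t ^ 3)|
        = 2 * κ * |deriv a t + κ| / a t ^ 3 := by
          rw [abs_neg, abs_div, abs_mul, abs_of_nonneg (by positivity : 0 ≤ 2 * κ),
            abs_of_pos (pow_pos ha 3)]
      _ ≤ 2 * κ * (a t ^ 2 / 2) / a t ^ 3 := by gcongr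
      _ = κ / a t := by field_simp
  rw [norm_smul_of_nonneg (half_pos ha).le, norm_smul, Real.norm_eq_abs, add_comm]
  gcongr

theorem norm_add_norm_fastMode_le (h : IsOverdampedOscillation κ a y) (ht : 0 ≤ t) :
    ‖y t‖ + ‖fastMode κ a y t‖ ≤ ‖y 0‖ + ‖fastMode κ a y 0‖ :=
  norm_add_norm_le_of_dissipative ht
    (fun _ hx => (h.hasDerivAt hx.1).continuousAt.continuousWithinAt)
    (fun _ hx => (h.hasDerivAt_fastMode hx.1).continuousAt.continuousWithinAt)
    (fun _ hx => (h.hasDerivAt hx.1).hasDerivWithinAt)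
    (fun _ hx => (h.hasDerivAt_fastMode hx.1).hasDerivWithinAt)
    (fun _ hx => h.coupling_le_damping hx.1)

theorem stiffness_div_damping_le (h : IsOverdampedOscillation κ a y) (ht : 0 ≤ t) :
    κ / a t ≤ a t / 2 := by
  have ha := h.damping_pos t ht
  rw [div_le_iff₀ ha]
  linarith [h.stiffness_add_abs_deriv_damping_le t ht, abs_nonneg (deriv a t)]

theorem norm_fastMode_le (h : IsOverdampedOscillation κ a y) (ht : 0 ≤ t) :
    ‖fastMode κ a y t‖ ≤ ‖y t‖ + 2 / a t * ‖deriv y t‖ := by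
  have ha := h.damping_pos t ht
  have hκ : 0 ≤ κ / a t := div_nonneg h.stiffness_nonneg ha.le
  calc ‖fastMode κ a y t‖
      ≤ 2 / a t * (‖deriv y t‖ + κ / a t * ‖y t‖) := by
        rw [fastMode, norm_smul_of_nonneg (by positivity), ← norm_smul_of_nonneg hκ]
        gcongr
        exact norm_add_le _ _
    _ ≤ 2 / a t * (‖deriv y t‖ + a t / 2 * ‖y t‖) := by
        grw [h.stiffness_div_damping_le ht]
    _ = ‖y t‖ + 2 / a t * ‖deriv y t‖ := by
        field_simp
        ring

theorem norm_add_norm_fastMode_le_initial (h : IsOverdampedOscillation κ a y) (ht : 0 ≤ t) :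
    ‖y t‖ + ‖fastMode κ a y t‖ ≤ 2 * ‖y 0‖ + 2 / a 0 * ‖deriv y 0‖ := by
  linarith [h.norm_add_norm_fastMode_le ht, h.norm_fastMode_le le_rfl]

theorem norm_le (h : IsOverdampedOscillation κ a y) (ht : 0 ≤ t) :
    ‖y t‖ ≤ 2 * ‖y 0‖ + 2 / a 0 * ‖deriv y 0‖ :=
  (le_add_of_nonneg_right (norm_nonneg _)).trans (h.norm_add_norm_fastMode_le_initial ht)

theorem norm_deriv_le (h : IsOverdampedOscillation κ a y) (ht : 0 ≤ t) :
    ‖deriv y t‖ ≤ a t / 2 * (2 * ‖y 0‖ + 2 / a 0 * ‖deriv y 0‖) := by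
  have ha := h.damping_pos t ht
  have hκ : 0 ≤ κ / a t := div_nonneg h.stiffness_nonneg ha.le
  calc ‖deriv y t‖
      ≤ κ / a t * ‖y t‖ + a t / 2 * ‖fastMode κ a y t‖ := by
        rw [(h.hasDerivAt ht).deriv, ← norm_smul_of_nonneg hκ,
          ← norm_smul_of_nonneg (half_pos ha).le, ← norm_neg ((κ / a t) • y t), ← neg_smul]
        exact norm_add_le _ _
    _ ≤ a t / 2 * ‖y t‖ + a t / 2 * ‖fastMode κ a y t‖ := by
        grw [h.stiffness_div_damping_le ht]
    _ = a t / 2 * (‖y t‖ + ‖fastMode κ a y t‖) := by ring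
    _ ≤ a t / 2 * (2 * ‖y 0‖ + 2 / a 0 * ‖deriv y 0‖) := by
        grw [h.norm_add_norm_fastMode_le_initial ht]

end IsOverdampedOscillation

end SingleFrequency

section OverdampingPair

/-- The coefficients `b` of the friction `b u_t` and `g` of the viscoelastic damping `-g Δu_t` for
which the over-damping regime is uniformly elliptic: the total damping `b + κ g` varies slowly, and
dominates the stiffness `κ`, simultaneously for all `κ ≥ 0`. -/
structure IsOverdampingPair (b g : ℝ → ℝ) : Prop where
  viscosity_pos : ∀ t, 0 ≤ t → 0 < g t
  differentiableAt_friction : ∀ t, 0 ≤ t → DifferentiableAt ℝ b t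
  differentiableAt_viscosity : ∀ t, 0 ≤ t → DifferentiableAt ℝ g t
  abs_deriv_friction_le : ∀ t, 0 ≤ t → |deriv b t| ≤ b t ^ 2 / 2
  one_add_abs_deriv_viscosity_le : ∀ t, 0 ≤ t → 1 + |deriv g t| ≤ b t * g t

namespace IsOverdampingPair

variable {b g : ℝ → ℝ} {t κ : ℝ}

theorem friction_pos (h : IsOverdampingPair b g) (ht : 0 ≤ t) : 0 < b t := by
  refine pos_of_mul_pos_left ?_ (h.viscosity_pos t ht).le
  linarith [h.one_add_abs_deriv_viscosity_le t ht, abs_nonneg (deriv g t)]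

theorem stiffness_add_abs_deriv_le (h : IsOverdampingPair b g) (hκ : 0 ≤ κ) (ht : 0 ≤ t) :
    κ + |deriv (fun s => b s + g s * κ) t| ≤ (b t + g t * κ) ^ 2 / 2 := by
  have hb := h.differentiableAt_friction t ht
  have hg := h.differentiableAt_viscosity t ht
  calc κ + |deriv (fun s => b s + g s * κ) t|
      = κ + |deriv b t + deriv g t * κ| := by
        rw [deriv_fun_add hb (hg.mul_const κ), deriv_mul_const hg]
    _ ≤ κ + (|deriv b t| + |deriv g t| * κ) := by
        grw [abs_add_le, abs_mul, abs_of_nonneg hκ]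
    _ = |deriv b t| + (1 + |deriv g t|) * κ := by ring
    _ ≤ b t ^ 2 / 2 + b t * g t * κ := by
        gcongr
        exacts [h.abs_deriv_friction_le t ht, h.one_add_abs_deriv_viscosity_le t ht]
    _ ≤ (b t + g t * κ) ^ 2 / 2 := by nlinarith [sq_nonneg (g t * κ)]

theorem isOverdampedOscillation {F : Type*} [NormedAddCommGroup F] [NormedSpace ℝ F] {y : ℝ → F}
    (h : IsOverdampingPair b g) (hκ : 0 ≤ κ) (hy : ∀ t, 0 ≤ t → DifferentiableAt ℝ y t)
    (hy' : ∀ t, 0 ≤ t → DifferentiableAt ℝ (deriv y) t)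
    (hode : ∀ t, 0 ≤ t → deriv (deriv y) t + κ • y t + (b t + g t * κ) • deriv y t = 0) :
    IsOverdampedOscillation κ (fun s => b s + g s * κ) y where
  stiffness_nonneg := hκ
  damping_pos t ht :=
    add_pos_of_pos_of_nonneg (h.friction_pos ht) (mul_nonneg (h.viscosity_pos t ht).le hκ)
  differentiableAt_damping t ht :=
    (h.differentiableAt_friction t ht).add ((h.differentiableAt_viscosity t ht).mul_const κ)
  stiffness_add_abs_deriv_damping_le _ ht := h.stiffness_add_abs_deriv_le hκ ht
  differentiableAt := hy
  hasDerivAt_deriv t ht := (hy' t ht).hasDerivAt.congr_deriv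
    (eq_neg_of_add_eq_zero_left (add_assoc (deriv (deriv y) t) _ _ ▸ hode t ht))

end IsOverdampingPair

theorem isOverdampingPair_exp_exp :
    IsOverdampingPair (fun t => Real.exp (Real.exp t)) (fun t => 2 * Real.exp (-t)) where
  viscosity_pos _ _ := by positivity
  differentiableAt_friction _ _ := by fun_prop
  differentiableAt_viscosity _ _ := by fun_prop
  abs_deriv_friction_le t _ := by
    have hderiv : deriv (fun t => Real.exp (Real.exp t)) t = Real.exp (Real.exp t) * Real.exp t :=
      (Real.hasDerivAt_exp t).exp.deriv
    rw [hderiv, abs_of_pos (by positivity)]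
    nlinarith [Real.exp_pos (Real.exp t), Real.two_mul_le_exp (x := Real.exp t)]
  one_add_abs_deriv_viscosity_le t ht := by
    have hderiv : deriv (fun t => 2 * Real.exp (-t)) t = -(2 * Real.exp (-t)) :=
      (((hasDerivAt_neg t).exp).const_mul 2).deriv.trans (by ring)
    have hexp : Real.exp t * Real.exp (-t) = 1 := by
      rw [← Real.exp_add, add_neg_cancel, Real.exp_zero]
    rw [hderiv, abs_neg, abs_of_pos (by positivity)]
    nlinarith [Real.exp_pos (-t), Real.one_le_exp ht, Real.two_mul_le_exp (x := Real.exp t)]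

end OverdampingPair

section FourierWeight

variable {E F : Type*} [NormedAddCommGroup E] [NormedAddCommGroup F] {s : ℝ} {v : E → F} {ξ : E}

/-- The modulus of the Fourier multiplier `|D|^s` applied to `v`, where `v` is given on the Fourier
side. -/
noncomputable def fourierWeighted (s : ℝ) (v : E → F) (ξ : E) : ℝ :=
  ‖ξ‖ ^ s * ‖v ξ‖

theorem fourierWeighted_nonneg (ξ : E) : 0 ≤ fourierWeighted s v ξ := by
  unfold fourierWeighted
  positivity

theorem fourierWeighted_sq (s : ℝ) (v : E → F) (ξ : E) :
    fourierWeighted s v ξ ^ 2 = ‖ξ‖ ^ (2 * s) * ‖v ξ‖ ^ 2 := by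
  rw [fourierWeighted, mul_pow, ← Real.rpow_mul_natCast (norm_nonneg ξ), Nat.cast_ofNat, mul_comm s]

theorem norm_sq_mul_fourierWeighted (hξ : ξ ≠ 0) :
    ‖ξ‖ ^ 2 * fourierWeighted s v ξ = fourierWeighted (s + 2) v ξ := by
  rw [fourierWeighted, fourierWeighted, Real.rpow_add (norm_pos_iff.2 hξ), Real.rpow_two]
  ring

/- This is where two powers of `‖ξ‖` are gained on `v₁`, from `‖ξ‖² / (β + γ ‖ξ‖²) ≤ 1 / γ`. -/
theorem rpow_norm_mul_add_le_fourierWeighted_add {v₀ v₁ : E → F} {β γ C : ℝ} (hβ : 0 ≤ β)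
    (hC : 2 ≤ C) (hCγ : 2 ≤ C * γ) (hξ : ξ ≠ 0) :
    ‖ξ‖ ^ s * (2 * ‖v₀ ξ‖ + 2 / (β + γ * ‖ξ‖ ^ 2) * ‖v₁ ξ‖) ≤
      C * (fourierWeighted s v₀ ξ + fourierWeighted (s - 2) v₁ ξ) := by
  have hγ : 0 < γ := pos_of_mul_pos_right (by linarith) (by linarith : 0 ≤ C)
  have : 0 < ‖ξ‖ := norm_pos_iff.2 hξ
  have hgain : 2 / (β + γ * ‖ξ‖ ^ 2) * ‖ξ‖ ^ 2 ≤ C := by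
    rw [div_mul_eq_mul_div, div_le_iff₀ (by positivity)]
    nlinarith [mul_le_mul_of_nonneg_right hCγ (sq_nonneg ‖ξ‖)]
  have hshift : ‖ξ‖ ^ 2 * fourierWeighted (s - 2) v₁ ξ = ‖ξ‖ ^ s * ‖v₁ ξ‖ := by
    rw [norm_sq_mul_fourierWeighted hξ, sub_add_cancel, fourierWeighted]
  calc ‖ξ‖ ^ s * (2 * ‖v₀ ξ‖ + 2 / (β + γ * ‖ξ‖ ^ 2) * ‖v₁ ξ‖)
      = 2 * fourierWeighted s v₀ ξ + 2 / (β + γ * ‖ξ‖ ^ 2) * (‖ξ‖ ^ s * ‖v₁ ξ‖) := by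
        rw [fourierWeighted]
        ring
    _ = 2 * fourierWeighted s v₀ ξ +
          2 / (β + γ * ‖ξ‖ ^ 2) * ‖ξ‖ ^ 2 * fourierWeighted (s - 2) v₁ ξ := by
        rw [← hshift, mul_assoc]
    _ ≤ C * fourierWeighted s v₀ ξ + C * fourierWeighted (s - 2) v₁ ξ := by
        have h₀ := fourierWeighted_nonneg (s := s) (v := v₀) ξ
        have h₁ := fourierWeighted_nonneg (s := s - 2) (v := v₁) ξ
        gcongr
    _ = C * (fourierWeighted s v₀ ξ + fourierWeighted (s - 2) v₁ ξ) := by ring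

end FourierWeight

section WeightedL2

variable {X E F : Type*} [MeasurableSpace X] [NormedAddCommGroup E] [MeasurableSpace E]
  [NormedAddCommGroup F]

theorem memLp_two_of_integrable_sq {ν : Measure X} {f : X → ℝ} (hf₀ : ∀ x, 0 ≤ f x)
    (hf : Integrable (fun x => f x ^ 2) ν) : MemLp f 2 ν := by
  refine (memLp_two_iff_integrable_sq ?_).2 hf
  simpa only [Function.comp_def, Real.sqrt_sq (hf₀ _)] using
    Real.continuous_sqrt.comp_aestronglyMeasurable hf.aestronglyMeasurable

theorem lpNorm_two_eq_sqrt_integral_sq {ν : Measure X} {f : X → ℝ} (hf : AEStronglyMeasurable f ν) :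
    lpNorm f 2 ν = √(∫ x, f x ^ 2 ∂ν) := by
  rw [lpNorm_eq_integral_norm_rpow_toReal two_ne_zero ENNReal.ofNat_ne_top hf, Real.sqrt_eq_rpow]
  simp

/-- Finiteness of the homogeneous Sobolev norm `‖|D|^s v‖_{L²}`, where `v` is given on the Fourier
side. -/
def MemFourierSobolev (μ : Measure E) (s : ℝ) (v : E → F) : Prop :=
  Integrable (fun ξ => ‖ξ‖ ^ (2 * s) * ‖v ξ‖ ^ 2) μ

/-- The homogeneous Sobolev norm `‖|D|^s v‖_{L²}`, where `v` is given on the Fourier side. Its value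
is `0` if `MemFourierSobolev μ s v` fails. -/
noncomputable def fourierSobolevNorm (μ : Measure E) (s : ℝ) (v : E → F) : ℝ :=
  √(∫ ξ, ‖ξ‖ ^ (2 * s) * ‖v ξ‖ ^ 2 ∂μ)

variable {μ : Measure E} {s s₀ s₁ : ℝ} {v v₀ v₁ : E → F}

theorem MemFourierSobolev.memLp_fourierWeighted (hv : MemFourierSobolev μ s v) :
    MemLp (fourierWeighted s v) 2 μ :=
  memLp_two_of_integrable_sq fourierWeighted_nonneg
    (by simpa only [fourierWeighted_sq, MemFourierSobolev] using hv)

theorem fourierSobolevNorm_eq_lpNorm (hv : AEStronglyMeasurable (fourierWeighted s v) μ) :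
    fourierSobolevNorm μ s v = lpNorm (fourierWeighted s v) 2 μ := by
  simp only [fourierSobolevNorm, lpNorm_two_eq_sqrt_integral_sq hv, fourierWeighted_sq]

theorem lpNorm_fourierWeighted_add_le (h₀ : MemFourierSobolev μ s₀ v₀)
    (h₁ : MemFourierSobolev μ s₁ v₁) :
    lpNorm (fourierWeighted s₀ v₀ + fourierWeighted s₁ v₁) 2 μ ≤
      fourierSobolevNorm μ s₀ v₀ + fourierSobolevNorm μ s₁ v₁ := by
  rw [fourierSobolevNorm_eq_lpNorm h₀.memLp_fourierWeighted.1,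
    fourierSobolevNorm_eq_lpNorm h₁.memLp_fourierWeighted.1]
  exact lpNorm_add_le h₀.memLp_fourierWeighted one_le_two

theorem memFourierSobolev_and_norm_le_of_le [OpensMeasurableSpace E] {φ : E → ℝ}
    (hv : AEStronglyMeasurable v μ) (hφ : MemLp φ 2 μ)
    (hle : ∀ᵐ ξ ∂μ, fourierWeighted s v ξ ≤ φ ξ) :
    MemFourierSobolev μ s v ∧ fourierSobolevNorm μ s v ≤ lpNorm φ 2 μ := by
  have hmeas : AEStronglyMeasurable (fourierWeighted s v) μ :=
    (measurable_norm.pow_const s).aestronglyMeasurable.mul hv.norm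
  have hnorm : ∀ᵐ ξ ∂μ, ‖fourierWeighted s v ξ‖ ≤ φ ξ := by
    simpa only [Real.norm_of_nonneg (fourierWeighted_nonneg _)] using hle
  have hmem : MemLp (fourierWeighted s v) 2 μ := hφ.mono' hmeas hnorm
  refine ⟨by simpa only [fourierWeighted_sq, MemFourierSobolev] using hmem.integrable_sq, ?_⟩
  rw [fourierSobolevNorm_eq_lpNorm hmeas, ← toReal_eLpNorm hmeas, ← toReal_eLpNorm hφ.1]
  exact ENNReal.toReal_mono hφ.eLpNorm_ne_top (eLpNorm_mono_ae_real hnorm)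

theorem aestronglyMeasurable_deriv_of_forall_ge [NormedSpace ℝ F] {ν : Measure X} {u : ℝ → X → F}
    {t : ℝ} (hu : ∀ s, t ≤ s → AEStronglyMeasurable (u s) ν)
    (hdiff : ∀ᵐ x ∂ν, DifferentiableAt ℝ (fun s => u s x) t) :
    AEStronglyMeasurable (fun x => deriv (fun s => u s x) t) ν := by
  obtain ⟨τ, -, hτt, hτ⟩ := exists_seq_strictAnti_tendsto t
  have hτ' : Tendsto τ atTop (𝓝[≠] t) :=
    tendsto_nhdsWithin_iff.2 ⟨hτ, .of_forall fun n => (hτt n).ne'⟩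
  refine aestronglyMeasurable_of_tendsto_ae atTop (f := fun n x => slope (fun s => u s x) t (τ n))
    (fun n => ?_) ?_
  · exact ((hu _ (hτt n).le).sub (hu t le_rfl)).const_smul _
  · filter_upwards [hdiff] with x hx
    exact (hasDerivAt_iff_tendsto_slope.1 hx.hasDerivAt).comp hτ'

end WeightedL2

section FourierSolution

variable {E F : Type*} [NormedAddCommGroup E] [MeasurableSpace E]
  [NormedAddCommGroup F] [NormedSpace ℝ F]

/-- `u` is the Fourier transform in space of a solution on `[0, ∞)` of
`u_tt - Δu + b u_t - g Δu_t = 0` with data `u₀`, `u₁`: at every frequency it solves the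
corresponding ordinary differential equation. Frequencies may range over any normed group `E`. -/
structure IsFourierSolution (μ : Measure E) (b g : ℝ → ℝ) (u : ℝ → E → F) (u₀ u₁ : E → F) :
    Prop where
  aestronglyMeasurable : ∀ t, 0 ≤ t → AEStronglyMeasurable (u t) μ
  differentiableAt : ∀ ξ t, 0 ≤ t → DifferentiableAt ℝ (fun s => u s ξ) t
  differentiableAt_deriv : ∀ ξ t, 0 ≤ t → DifferentiableAt ℝ (deriv fun s => u s ξ) t
  deriv_deriv_add : ∀ ξ t, 0 ≤ t → deriv (deriv fun s => u s ξ) t + ‖ξ‖ ^ 2 • u t ξ +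
    (b t + g t * ‖ξ‖ ^ 2) • deriv (fun s => u s ξ) t = 0
  initial_value : ∀ ξ, u 0 ξ = u₀ ξ
  initial_velocity : ∀ ξ, deriv (fun s => u s ξ) 0 = u₁ ξ

namespace IsFourierSolution

variable {μ : Measure E} {b g : ℝ → ℝ} {u : ℝ → E → F} {u₀ u₁ : E → F} {C σ t : ℝ} {ξ : E}

theorem isOverdampedOscillation (hu : IsFourierSolution μ b g u u₀ u₁)
    (hbg : IsOverdampingPair b g) (ξ : E) :
    IsOverdampedOscillation (‖ξ‖ ^ 2) (fun s => b s + g s * ‖ξ‖ ^ 2) (fun s => u s ξ) :=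
  hbg.isOverdampedOscillation (sq_nonneg _) (hu.differentiableAt ξ) (hu.differentiableAt_deriv ξ)
    (hu.deriv_deriv_add ξ)

theorem fourierWeighted_le (hu : IsFourierSolution μ b g u u₀ u₁) (hbg : IsOverdampingPair b g)
    (hC : 2 ≤ C) (hCg : 2 ≤ C * g 0) (ht : 0 ≤ t) (hξ : ξ ≠ 0) :
    fourierWeighted σ (u t) ξ ≤ C * (fourierWeighted σ u₀ ξ + fourierWeighted (σ - 2) u₁ ξ) := by
  have hbound := (hu.isOverdampedOscillation hbg ξ).norm_le ht
  rw [hu.initial_value, hu.initial_velocity] at hbound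
  grw [← rpow_norm_mul_add_le_fourierWeighted_add (hbg.friction_pos le_rfl).le hC hCg hξ, ← hbound,
    fourierWeighted]

theorem fourierWeighted_deriv_le (hu : IsFourierSolution μ b g u u₀ u₁)
    (hbg : IsOverdampingPair b g) (hC : 2 ≤ C) (hCg : 2 ≤ C * g 0) (ht : 0 ≤ t) (hξ : ξ ≠ 0) :
    fourierWeighted σ (fun ξ => deriv (fun s => u s ξ) t) ξ ≤
      C * b t * (fourierWeighted σ u₀ ξ + fourierWeighted (σ - 2) u₁ ξ) +
        C * g t * (fourierWeighted (σ + 2) u₀ ξ + fourierWeighted σ u₁ ξ) := by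
  have hb := hbg.friction_pos ht
  have hg := hbg.viscosity_pos t ht
  have hbound := (hu.isOverdampedOscillation hbg ξ).norm_deriv_le ht
  rw [hu.initial_value, hu.initial_velocity] at hbound
  have hdata : 0 ≤ C * (fourierWeighted σ u₀ ξ + fourierWeighted (σ - 2) u₁ ξ) :=
    mul_nonneg (by linarith) (add_nonneg (fourierWeighted_nonneg ξ) (fourierWeighted_nonneg ξ))
  calc fourierWeighted σ (fun ξ => deriv (fun s => u s ξ) t) ξ
      ≤ (b t + g t * ‖ξ‖ ^ 2) / 2 *
          (‖ξ‖ ^ σ * (2 * ‖u₀ ξ‖ + 2 / (b 0 + g 0 * ‖ξ‖ ^ 2) * ‖u₁ ξ‖)) := by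
        grw [fourierWeighted, hbound]
        exact (mul_left_comm _ _ _).le
    _ ≤ (b t + g t * ‖ξ‖ ^ 2) / 2 *
          (C * (fourierWeighted σ u₀ ξ + fourierWeighted (σ - 2) u₁ ξ)) := by
        grw [rpow_norm_mul_add_le_fourierWeighted_add (hbg.friction_pos le_rfl).le hC hCg hξ]
    _ ≤ (b t + g t * ‖ξ‖ ^ 2) *
          (C * (fourierWeighted σ u₀ ξ + fourierWeighted (σ - 2) u₁ ξ)) := by
        gcongr
        exact half_le_self (by positivity)
    _ = C * b t * (fourierWeighted σ u₀ ξ + fourierWeighted (σ - 2) u₁ ξ) +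
        C * g t * (fourierWeighted (σ + 2) u₀ ξ + fourierWeighted σ u₁ ξ) := by
        have hshift : ‖ξ‖ ^ 2 * fourierWeighted (σ - 2) u₁ ξ = fourierWeighted σ u₁ ξ := by
          rw [norm_sq_mul_fourierWeighted hξ, sub_add_cancel]
        rw [← norm_sq_mul_fourierWeighted hξ, ← hshift]
        ring

variable [OpensMeasurableSpace E]

theorem fourierSobolevNorm_le (hu : IsFourierSolution μ b g u u₀ u₁) (hbg : IsOverdampingPair b g)
    (hμ : μ {0} = 0) (hC : 2 ≤ C) (hCg : 2 ≤ C * g 0) (ht : 0 ≤ t)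
    (h₀ : MemFourierSobolev μ σ u₀) (h₁ : MemFourierSobolev μ (σ - 2) u₁) :
    MemFourierSobolev μ σ (u t) ∧ fourierSobolevNorm μ σ (u t) ≤
      C * (fourierSobolevNorm μ σ u₀ + fourierSobolevNorm μ (σ - 2) u₁) := by
  have hdata := h₀.memLp_fourierWeighted.add h₁.memLp_fourierWeighted
  obtain ⟨hmem, hle⟩ := memFourierSobolev_and_norm_le_of_le (s := σ)
    (hu.aestronglyMeasurable t ht) (hdata.const_smul C)
    ((measure_eq_zero_iff_ae_notMem.1 hμ).mono fun ξ hξ => hu.fourierWeighted_le hbg hC hCg ht hξ)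
  refine ⟨hmem, hle.trans ?_⟩
  rw [lpNorm_const_smul, coe_nnnorm, Real.norm_of_nonneg (by linarith)]
  grw [lpNorm_fourierWeighted_add_le h₀ h₁]

theorem fourierSobolevNorm_deriv_le (hu : IsFourierSolution μ b g u u₀ u₁)
    (hbg : IsOverdampingPair b g) (hμ : μ {0} = 0) (hC : 2 ≤ C) (hCg : 2 ≤ C * g 0) (ht : 0 ≤ t)
    (h₀ : MemFourierSobolev μ σ u₀) (h₁ : MemFourierSobolev μ (σ - 2) u₁)
    (h₀' : MemFourierSobolev μ (σ + 2) u₀) (h₁' : MemFourierSobolev μ σ u₁) :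
    MemFourierSobolev μ σ (fun ξ => deriv (fun s => u s ξ) t) ∧
      fourierSobolevNorm μ σ (fun ξ => deriv (fun s => u s ξ) t) ≤
        C * b t * (fourierSobolevNorm μ σ u₀ + fourierSobolevNorm μ (σ - 2) u₁) +
          C * g t * (fourierSobolevNorm μ (σ + 2) u₀ + fourierSobolevNorm μ σ u₁) := by
  have hb := hbg.friction_pos ht
  have hg := hbg.viscosity_pos t ht
  have hmeas : AEStronglyMeasurable (fun ξ => deriv (fun s => u s ξ) t) μ :=
    aestronglyMeasurable_deriv_of_forall_ge
      (fun s hs => hu.aestronglyMeasurable s (ht.trans hs))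
      (.of_forall fun ξ => hu.differentiableAt ξ t ht)
  have hlow := (h₀.memLp_fourierWeighted.add h₁.memLp_fourierWeighted).const_smul (C * b t)
  have hhigh := (h₀'.memLp_fourierWeighted.add h₁'.memLp_fourierWeighted).const_smul (C * g t)
  obtain ⟨hmem, hle⟩ := memFourierSobolev_and_norm_le_of_le (s := σ) hmeas (hlow.add hhigh)
    ((measure_eq_zero_iff_ae_notMem.1 hμ).mono fun ξ hξ =>
      hu.fourierWeighted_deriv_le hbg hC hCg ht hξ)
  refine ⟨hmem, (hle.trans (lpNorm_add_le hlow one_le_two)).trans ?_⟩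
  rw [lpNorm_const_smul, lpNorm_const_smul, coe_nnnorm, coe_nnnorm,
    Real.norm_of_nonneg (by positivity), Real.norm_of_nonneg (by positivity)]
  grw [lpNorm_fourierWeighted_add_le h₀ h₁, lpNorm_fourierWeighted_add_le h₀' h₁']

end IsFourierSolution

end FourierSolution

theorem isFourierSolution_of_contDiff {E : Type*} [NormedAddCommGroup E] [MeasurableSpace E]
    {μ : Measure E} {b g : ℝ → ℝ} {u : ℝ → E → ℂ} {u₀ u₁ : E → ℂ}
    (hmeas : Measurable fun p : ℝ × E => u p.1 p.2) (hsmooth : ∀ ξ, ContDiff ℝ 2 fun s => u s ξ)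
    (hode : ∀ ξ t, 0 ≤ t → deriv (deriv fun s => u s ξ) t + ((‖ξ‖ ^ 2 : ℝ) : ℂ) * u t ξ +
      ((b t + g t * ‖ξ‖ ^ 2 : ℝ) : ℂ) * deriv (fun s => u s ξ) t = 0)
    (h₀ : ∀ ξ, u 0 ξ = u₀ ξ) (h₁ : ∀ ξ, deriv (fun s => u s ξ) 0 = u₁ ξ) :
    IsFourierSolution μ b g u u₀ u₁ where
  aestronglyMeasurable _ _ := hmeas.of_uncurry_left.aestronglyMeasurable
  differentiableAt ξ _ _ := (hsmooth ξ).differentiable two_ne_zero _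
  differentiableAt_deriv ξ _ _ :=
    (contDiff_succ_iff_deriv (n := 1).1 (hsmooth ξ)).2.2.differentiable one_ne_zero _
  deriv_deriv_add := hode
  initial_value := h₀
  initial_velocity := h₁

theorem overdamping_model_three_estimates_general {E F : Type*} [NormedAddCommGroup E]
    [MeasurableSpace E] [OpensMeasurableSpace E] [NormedAddCommGroup F] [NormedSpace ℝ F]
    {μ : Measure E} (hμ : μ {0} = 0) {b g : ℝ → ℝ} (hbg : IsOverdampingPair b g) :
    ∃ C : ℝ, 0 < C ∧ ∀ (σ : ℝ) (u : ℝ → E → F) (u₀ u₁ : E → F), IsFourierSolution μ b g u u₀ u₁ →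
      ∀ t, 0 ≤ t → MemFourierSobolev μ σ u₀ → MemFourierSobolev μ (σ - 2) u₁ →
        (MemFourierSobolev μ σ (u t) ∧ fourierSobolevNorm μ σ (u t) ≤
          C * (fourierSobolevNorm μ σ u₀ + fourierSobolevNorm μ (σ - 2) u₁)) ∧
        (MemFourierSobolev μ (σ + 2) u₀ → MemFourierSobolev μ σ u₁ →
          MemFourierSobolev μ σ (fun ξ => deriv (fun s => u s ξ) t) ∧
          fourierSobolevNorm μ σ (fun ξ => deriv (fun s => u s ξ) t) ≤
            C * b t * (fourierSobolevNorm μ σ u₀ + fourierSobolevNorm μ (σ - 2) u₁) +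
              C * g t * (fourierSobolevNorm μ (σ + 2) u₀ + fourierSobolevNorm μ σ u₁)) := by
  have hC : 2 ≤ max 2 (2 / g 0) := le_max_left _ _
  have hCg : 2 ≤ max 2 (2 / g 0) * g 0 :=
    (div_le_iff₀ (hbg.viscosity_pos 0 le_rfl)).1 (le_max_right _ _)
  exact ⟨max 2 (2 / g 0), by positivity, fun _ _ _ _ hu _ ht h₀ h₁ =>
    ⟨hu.fourierSobolevNorm_le hbg hμ hC hCg ht h₀ h₁,
      hu.fourierSobolevNorm_deriv_le hbg hμ hC hCg ht h₀ h₁⟩⟩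

/-- Theorem 5.4 of the paper: the uniformly elliptic over-damping model with
`b(t) = e^(eᵗ)` and `g(t) = 2e^(-t)`, for which `b(t)g(t) ≥ 2`. -/
theorem overdamping_model_three_estimates (n : ℕ) (hn : 1 ≤ n) :
    ∀ σ : ℝ, 2 ≤ σ →
      ∃ C : ℝ, 0 < C ∧
        ∀ (uh : ℝ → EuclideanSpace ℝ (Fin n) → ℂ) (u₀ u₁ : EuclideanSpace ℝ (Fin n) → ℂ),
          Measurable (fun p : ℝ × EuclideanSpace ℝ (Fin n) => uh p.1 p.2) →
          (∀ ξ : EuclideanSpace ℝ (Fin n), ContDiff ℝ 2 (fun s => uh s ξ)) →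
          (∀ (ξ : EuclideanSpace ℝ (Fin n)) (t : ℝ), 0 ≤ t →
            deriv (deriv (fun s => uh s ξ)) t + ((‖ξ‖ ^ 2 : ℝ) : ℂ) * uh t ξ +
              ((Real.exp (Real.exp t) + 2 * Real.exp (-t) * ‖ξ‖ ^ 2 : ℝ) : ℂ) * deriv (fun s => uh s ξ) t = 0) →
          (∀ ξ : EuclideanSpace ℝ (Fin n), uh 0 ξ = u₀ ξ) →
          (∀ ξ : EuclideanSpace ℝ (Fin n), deriv (fun s => uh s ξ) 0 = u₁ ξ) →
          ∀ t : ℝ, 0 ≤ t →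
            Integrable (fun ξ : EuclideanSpace ℝ (Fin n) => ‖ξ‖ ^ (2 * σ) * ‖u₀ ξ‖ ^ 2) →
            Integrable (fun ξ : EuclideanSpace ℝ (Fin n) => ‖ξ‖ ^ (2 * (σ - 2)) * ‖u₁ ξ‖ ^ 2) →
            Integrable (fun ξ : EuclideanSpace ℝ (Fin n) => ‖ξ‖ ^ (2 * (σ + 2)) * ‖u₀ ξ‖ ^ 2) →
            Integrable (fun ξ : EuclideanSpace ℝ (Fin n) => ‖ξ‖ ^ (2 * σ) * ‖u₁ ξ‖ ^ 2) →
            Real.sqrt (∫ ξ : EuclideanSpace ℝ (Fin n), ‖ξ‖ ^ (2 * σ) * ‖uh t ξ‖ ^ 2) ≤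
                C * (Real.sqrt (∫ ξ : EuclideanSpace ℝ (Fin n), ‖ξ‖ ^ (2 * σ) * ‖u₀ ξ‖ ^ 2) + Real.sqrt (∫ ξ : EuclideanSpace ℝ (Fin n), ‖ξ‖ ^ (2 * (σ - 2)) * ‖u₁ ξ‖ ^ 2)) ∧
              Real.sqrt (∫ ξ : EuclideanSpace ℝ (Fin n), ‖ξ‖ ^ (2 * σ) * ‖deriv (fun s => uh s ξ) t‖ ^ 2) ≤
                C * Real.exp (Real.exp t) *
                    (Real.sqrt (∫ ξ : EuclideanSpace ℝ (Fin n), ‖ξ‖ ^ (2 * σ) * ‖u₀ ξ‖ ^ 2) + Real.sqrt (∫ ξ : EuclideanSpace ℝ (Fin n), ‖ξ‖ ^ (2 * (σ - 2)) * ‖u₁ ξ‖ ^ 2)) +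
                  C * (2 * Real.exp (-t)) *
                    (Real.sqrt (∫ ξ : EuclideanSpace ℝ (Fin n), ‖ξ‖ ^ (2 * (σ + 2)) * ‖u₀ ξ‖ ^ 2) + Real.sqrt (∫ ξ : EuclideanSpace ℝ (Fin n), ‖ξ‖ ^ (2 * σ) * ‖u₁ ξ‖ ^ 2)) := by
  intro σ _
  have : NeZero n := ⟨by lia⟩
  obtain ⟨C, hC, hest⟩ := overdamping_model_three_estimates_general (F := ℂ) (μ := volume)
    (measure_singleton (0 : EuclideanSpace ℝ (Fin n))) isOverdampingPair_exp_exp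
  refine ⟨C, hC, fun uh u₀ u₁ hmeas hsmooth hode hu₀ hu₁ t ht h₀ h₁ h₀' h₁' => ?_⟩
  have hsol := isFourierSolution_of_contDiff (μ := volume) hmeas hsmooth hode hu₀ hu₁
  exact (hest σ uh u₀ u₁ hsol t ht h₀ h₁).imp And.right fun hderiv => (hderiv h₀' h₁').2
end

section
/- Let n ≥ 1, N > 0. Assume g : [0,∞) → ℝ is C¹ with g(t) > 0 and g'(t) > 0 for all t and ∫₀^∞ 1/g(τ) dτ < ∞; assume b : [0,∞) → ℝ is C¹ with b(t) > 0, b'(t) < 0 and ∫₀^∞ b(τ) dτ < ∞. Set G(t) = ½∫₀ᵗ g(τ) dτ. Then there is a constant C > 0 (depending only on b, g and N, not on ξ, s, t) such that for every ξ ∈ ℝⁿ, every 0 ≤ s ≤ t with G(t)|ξ|² ≤ N, and every twice continuously differentiable v : [0,∞) → ℂ satisfying v''(τ) + |ξ|²v(τ) + (b(τ)+g(τ)|ξ|²)v'(τ) = 0 on [s,t], one has g(t)|ξ|²|v(t)| + |v'(t)| ≤ C (g(t)/g(s)) ( g(s)|ξ|²|v(s)| + |v'(s)| ). -/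
open MeasureTheory Filter

/-!
Put `r = |ξ|²` and let `h` be a primitive of `1 / g`. In the variables `p = e⁻ʰ r v`,
`q = e⁻ʰ v' / g` the equation becomes the linear system

  `p' = -(1 / g) p + g r q`,  `q' = -(1 / g) p - (1 / g + b + g r + g' / g) q`,

whose matrix is diagonally dominant by columns with nonpositive diagonal as soon as
`1 / g + b + g' / g ≥ 0`. Such a system is dissipative for the `ℓ¹` norm, so
`e⁻ʰ (r ‖v‖ + ‖v'‖ / g) = ‖p‖ + ‖q‖` is nonincreasing, and `h t - h s ≤ ∫₀^∞ 1 / g`. Expressing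
dissipativity of `y` as `‖y + c y'‖ ≤ ‖y‖` for some `c > 0`, instead of differentiating `‖y‖`,
avoids any regularization of the norm at its zeros.
-/

open Set Topology
open WithLp (toLp)

section Dissipative

variable {F : Type*} [NormedAddCommGroup F] [NormedSpace ℝ F]

lemma norm_add_smul_le_of_norm_add_smul_le {x y : F} {c d : ℝ} (hd : 0 ≤ d) (hdc : d ≤ c)
    (hc : 0 < c) (h : ‖x + c • y‖ ≤ ‖x‖) : ‖x + d • y‖ ≤ ‖x‖ := by
  have hmem : x + (d / c) • c • y ∈ Metric.closedBall (0 : F) ‖x‖ :=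
    (convex_closedBall 0 ‖x‖).add_smul_mem (by simp) (by simpa using h)
      ⟨by positivity, (div_le_one hc).2 hdc⟩
  rwa [smul_smul, div_mul_cancel₀ d hc.ne', mem_closedBall_zero_iff] at hmem

lemma eventually_slope_norm_lt_of_norm_add_smul_le {f : ℝ → F} {f' : F} {x c ε : ℝ}
    (hf : HasDerivWithinAt f f' (Ioi x) x) (hc : 0 < c) (hdiss : ‖f x + c • f'‖ ≤ ‖f x‖)
    (hε : 0 < ε) : ∀ᶠ z in 𝓝[>] x, slope (fun y ↦ ‖f y‖) x z < ε := by
  filter_upwards [(hasDerivWithinAt_iff_isLittleO.1 hf).def (half_pos hε),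
    Ioo_mem_nhdsGT (lt_add_of_pos_right x hc)] with z hremainder hz
  have hxz : 0 < z - x := sub_pos.2 hz.1
  have hstep : ‖f x + (z - x) • f'‖ ≤ ‖f x‖ :=
    norm_add_smul_le_of_norm_add_smul_le hxz.le (by linarith [hz.2]) hc hdiss
  rw [Real.norm_of_nonneg hxz.le, sub_sub] at hremainder
  rw [slope_def_field, div_lt_iff₀ hxz]
  have htriangle := norm_le_norm_add_norm_sub' (f z) (f x + (z - x) • f')
  linarith [mul_pos hε hxz]

theorem antitoneOn_norm_of_norm_add_smul_deriv_le {f f' : ℝ → F} {S : Set ℝ} (hS : S.OrdConnected)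
    (hf : ∀ x ∈ S, HasDerivWithinAt f (f' x) S x)
    (hdiss : ∀ x ∈ S, ∃ c > (0 : ℝ), ‖f x + c • f' x‖ ≤ ‖f x‖) :
    AntitoneOn (fun x ↦ ‖f x‖) S := by
  intro a ha b hb hab
  have hsub : Icc a b ⊆ S := hS.out ha hb
  refine image_le_of_liminf_slope_right_le_deriv_boundary (B := fun _ ↦ ‖f a‖) (B' := fun _ ↦ 0)
    (fun x hx ↦ ((hf x (hsub hx)).mono hsub).continuousWithinAt.norm) le_rfl continuousOn_const
    (fun x _ ↦ hasDerivWithinAt_const x _ _) (fun x hx ε hε ↦ ?_) (right_mem_Icc.2 hab)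
  have hxS : x ∈ S := hsub (Ico_subset_Icc_self hx)
  have hright : HasDerivWithinAt f (f' x) (Ioi x) x :=
    ((hf x hxS).mono hsub).mono_of_mem_nhdsWithin (Icc_mem_nhdsGT_of_mem hx)
  obtain ⟨c, hc, hle⟩ := hdiss x hxS
  exact (eventually_slope_norm_lt_of_norm_add_smul_le hright hc hle hε).frequently

end Dissipative

section LinearSystem

variable {E : Type*} [NormedAddCommGroup E] [NormedSpace ℝ E]

lemma exists_norm_add_smul_le_of_diagonally_dominant {α β γ δ : ℝ} (hγ : |γ| ≤ α) (hβ : |β| ≤ δ)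
    (p q : E) :
    ∃ c > (0 : ℝ), ‖p + c • (-α • p + β • q)‖ + ‖q + c • (γ • p - δ • q)‖ ≤ ‖p‖ + ‖q‖ := by
  have hα : 0 ≤ α := (abs_nonneg γ).trans hγ
  have hδ : 0 ≤ δ := (abs_nonneg β).trans hβ
  obtain ⟨c, hc, hcα, hcδ⟩ : ∃ c : ℝ, 0 < c ∧ c * α ≤ 1 ∧ c * δ ≤ 1 := by
    refine ⟨(1 + α + δ)⁻¹, by positivity, ?_, ?_⟩ <;>
      exact inv_mul_le_one_of_le₀ (by linarith) (by positivity)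
  have hp : ‖p + c • (-α • p + β • q)‖ ≤ (1 - c * α) * ‖p‖ + c * |β| * ‖q‖ := by
    calc ‖p + c • (-α • p + β • q)‖ = ‖(1 - c * α) • p + (c * β) • q‖ := by congr 1; module
      _ ≤ ‖(1 - c * α) • p‖ + ‖(c * β) • q‖ := norm_add_le _ _
      _ = _ := by
        rw [norm_smul, norm_smul, Real.norm_of_nonneg (sub_nonneg.2 hcα), Real.norm_eq_abs,
          abs_mul, abs_of_pos hc]
  have hq : ‖q + c • (γ • p - δ • q)‖ ≤ c * |γ| * ‖p‖ + (1 - c * δ) * ‖q‖ := by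
    calc ‖q + c • (γ • p - δ • q)‖ = ‖(c * γ) • p + (1 - c * δ) • q‖ := by congr 1; module
      _ ≤ ‖(c * γ) • p‖ + ‖(1 - c * δ) • q‖ := norm_add_le _ _
      _ = _ := by
        rw [norm_smul, norm_smul, Real.norm_of_nonneg (sub_nonneg.2 hcδ), Real.norm_eq_abs,
          abs_mul, abs_of_pos hc]
  have hγp : c * |γ| * ‖p‖ ≤ c * α * ‖p‖ := by gcongr
  have hβq : c * |β| * ‖q‖ ≤ c * δ * ‖q‖ := by gcongr
  exact ⟨c, hc, by linarith⟩

theorem antitoneOn_norm_add_norm_of_diagonally_dominant {p q : ℝ → E} {α β γ δ : ℝ → ℝ}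
    {S : Set ℝ} (hS : S.OrdConnected)
    (hp : ∀ τ ∈ S, HasDerivWithinAt p (-α τ • p τ + β τ • q τ) S τ)
    (hq : ∀ τ ∈ S, HasDerivWithinAt q (γ τ • p τ - δ τ • q τ) S τ)
    (hγ : ∀ τ ∈ S, |γ τ| ≤ α τ) (hβ : ∀ τ ∈ S, |β τ| ≤ δ τ) :
    AntitoneOn (fun τ ↦ ‖p τ‖ + ‖q τ‖) S := by
  let y (τ : ℝ) : WithLp 1 (E × E) := toLp 1 (p τ, q τ)
  have hy : ∀ τ ∈ S, HasDerivWithinAt y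
      (toLp 1 (-α τ • p τ + β τ • q τ, γ τ • p τ - δ τ • q τ)) S τ := fun τ hτ ↦
    (WithLp.prodContinuousLinearEquiv 1 ℝ E E).symm.toContinuousLinearMap.hasFDerivAt
      |>.comp_hasDerivWithinAt τ ((hp τ hτ).prodMk (hq τ hτ))
  have hanti := antitoneOn_norm_of_norm_add_smul_deriv_le hS hy fun τ hτ ↦ by
    simpa [y, WithLp.prod_norm_eq_of_L1] using
      exists_norm_add_smul_le_of_diagonally_dominant (hγ τ hτ) (hβ τ hτ) (p τ) (q τ)
  simpa [y, WithLp.prod_norm_eq_of_L1] using hanti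

end LinearSystem

/-- `v`, with derivative `v'`, solves `v'' + r v + (b + g r) v' = 0` on `S`: the Fourier-transformed
equation at a frequency with `|ξ|² = r`. Derivatives are one-sided at the endpoints of `S`. -/
structure IsDampedSolutionOn {E : Type*} [NormedAddCommGroup E] [NormedSpace ℝ E]
    (b g : ℝ → ℝ) (r : ℝ) (v v' : ℝ → E) (S : Set ℝ) : Prop where
  hasDerivWithinAt : ∀ τ ∈ S, HasDerivWithinAt v (v' τ) S τ
  hasDerivWithinAt_deriv : ∀ τ ∈ S,
    HasDerivWithinAt v' (-(r • v τ) - (b τ + g τ * r) • v' τ) S τ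

namespace IsDampedSolutionOn

variable {E : Type*} [NormedAddCommGroup E] [NormedSpace ℝ E]
  {b g g' h : ℝ → ℝ} {r s t : ℝ} {v v' : ℝ → E} {S : Set ℝ}

lemma of_contDiff (hv : ContDiff ℝ 2 v)
    (hode : ∀ τ ∈ S, deriv (deriv v) τ + r • v τ + (b τ + g τ * r) • deriv v τ = 0) :
    IsDampedSolutionOn b g r v (deriv v) S where
  hasDerivWithinAt τ _ := (hv.differentiable two_ne_zero τ).hasDerivAt.hasDerivWithinAt
  hasDerivWithinAt_deriv τ hτ := by
    have hsecond : deriv (deriv v) τ = -(r • v τ) - (b τ + g τ * r) • deriv v τ := by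
      rw [← sub_eq_zero, ← hode τ hτ]
      abel
    exact hsecond ▸ (hv.differentiable_deriv_two τ).hasDerivAt.hasDerivWithinAt

lemma hasDerivWithinAt_exp_neg_mul_smul (hsol : IsDampedSolutionOn b g r v v' S)
    {τ : ℝ} (hτ : τ ∈ S) (hh : HasDerivWithinAt h (g τ)⁻¹ S τ) (hg_ne : g τ ≠ 0) :
    HasDerivWithinAt (fun τ ↦ (Real.exp (-h τ) * r) • v τ)
      (-(g τ)⁻¹ • (Real.exp (-h τ) * r) • v τ +
        (g τ * r) • (Real.exp (-h τ) * (g τ)⁻¹) • v' τ) S τ := by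
  refine ((hh.fun_neg.exp.mul_const r).fun_smul (hsol.hasDerivWithinAt τ hτ)).congr_deriv ?_
  match_scalars <;> field_simp

lemma hasDerivWithinAt_exp_neg_mul_smul_deriv (hsol : IsDampedSolutionOn b g r v v' S)
    {τ : ℝ} (hτ : τ ∈ S) (hg : HasDerivWithinAt g (g' τ) S τ)
    (hh : HasDerivWithinAt h (g τ)⁻¹ S τ) (hg_ne : g τ ≠ 0) :
    HasDerivWithinAt (fun τ ↦ (Real.exp (-h τ) * (g τ)⁻¹) • v' τ)
      (-(g τ)⁻¹ • (Real.exp (-h τ) * r) • v τ -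
        ((b τ * g τ + g' τ + 1) / g τ + g τ * r) • (Real.exp (-h τ) * (g τ)⁻¹) • v' τ) S τ := by
  refine ((hh.fun_neg.exp.fun_mul (hg.fun_inv hg_ne)).fun_smul
    (hsol.hasDerivWithinAt_deriv τ hτ)).congr_deriv ?_
  match_scalars
  · field_simp
  · field_simp
    ring

theorem antitoneOn_exp_mul_energy (hsol : IsDampedSolutionOn b g r v v' S)
    (hS : S.OrdConnected) (hr : 0 ≤ r)
    (hg : ∀ τ ∈ S, HasDerivWithinAt g (g' τ) S τ)
    (hh : ∀ τ ∈ S, HasDerivWithinAt h (g τ)⁻¹ S τ) (hg_pos : ∀ τ ∈ S, 0 < g τ)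
    (hbg : ∀ τ ∈ S, -1 ≤ b τ * g τ + g' τ) :
    AntitoneOn (fun τ ↦ Real.exp (-h τ) * (r * ‖v τ‖ + ‖v' τ‖ / g τ)) S := by
  have hdominant : ∀ τ ∈ S, |g τ * r| ≤ (b τ * g τ + g' τ + 1) / g τ + g τ * r := fun τ hτ ↦ by
    rw [abs_of_nonneg (mul_nonneg (hg_pos τ hτ).le hr)]
    exact le_add_of_nonneg_left (div_nonneg (by linarith [hbg τ hτ]) (hg_pos τ hτ).le)
  have hanti := antitoneOn_norm_add_norm_of_diagonally_dominant hS
    (fun τ hτ ↦ hsol.hasDerivWithinAt_exp_neg_mul_smul hτ (hh τ hτ) (hg_pos τ hτ).ne')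
    (fun τ hτ ↦
      hsol.hasDerivWithinAt_exp_neg_mul_smul_deriv hτ (hg τ hτ) (hh τ hτ) (hg_pos τ hτ).ne')
    (fun τ hτ ↦ by rw [abs_neg, abs_of_pos (inv_pos.2 (hg_pos τ hτ))])
    hdominant
  refine hanti.congr fun τ hτ ↦ ?_
  simp only [norm_smul, norm_mul, norm_inv, Real.norm_of_nonneg hr,
    Real.norm_of_nonneg (hg_pos τ hτ).le, Real.norm_of_nonneg (Real.exp_pos _).le]
  ring

theorem energy_le_exp_integral_mul (hsol : IsDampedSolutionOn b g r v v' (Icc s t))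
    (hst : s ≤ t) (hr : 0 ≤ r)
    (hg : ∀ τ ∈ Icc s t, HasDerivWithinAt g (g' τ) (Icc s t) τ)
    (hg_pos : ∀ τ ∈ Icc s t, 0 < g τ) (hbg : ∀ τ ∈ Icc s t, -1 ≤ b τ * g τ + g' τ) :
    r * ‖v t‖ + ‖v' t‖ / g t ≤
      Real.exp (∫ τ in s..t, (g τ)⁻¹) * (r * ‖v s‖ + ‖v' s‖ / g s) := by
  have hcont : ContinuousOn (fun τ ↦ (g τ)⁻¹) (Icc s t) :=
    ContinuousOn.inv₀ (fun τ hτ ↦ (hg τ hτ).continuousWithinAt) fun τ hτ ↦ (hg_pos τ hτ).ne'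
  have hprimitive : ∀ τ ∈ Icc s t,
      HasDerivWithinAt (fun u ↦ ∫ x in s..u, (g x)⁻¹) (g τ)⁻¹ (Icc s t) τ := fun τ hτ ↦ by
    have : Fact (τ ∈ Icc s t) := ⟨hτ⟩
    exact intervalIntegral.integral_hasDerivWithinAt_right
      ((hcont.mono (Icc_subset_Icc_right hτ.2)).intervalIntegrable_of_Icc hτ.1)
      (hcont.stronglyMeasurableAtFilter_nhdsWithin measurableSet_Icc τ) (hcont τ hτ)
  have hdecay : Real.exp (-∫ τ in s..t, (g τ)⁻¹) * (r * ‖v t‖ + ‖v' t‖ / g t) ≤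
      Real.exp (-∫ τ in s..s, (g τ)⁻¹) * (r * ‖v s‖ + ‖v' s‖ / g s) :=
    hsol.antitoneOn_exp_mul_energy ordConnected_Icc hr hg hprimitive hg_pos hbg
      (left_mem_Icc.2 hst) (right_mem_Icc.2 hst) hst
  rwa [Real.exp_neg, inv_mul_le_iff₀ (Real.exp_pos _), intervalIntegral.integral_same, neg_zero,
    Real.exp_zero, one_mul] at hdecay

end IsDampedSolutionOn

lemma intervalIntegral_le_setIntegral_Ici {f : ℝ → ℝ} {a s t : ℝ}
    (hf : IntegrableOn f (Ici a)) (hf_nonneg : ∀ x ∈ Ici a, 0 ≤ f x) (has : a ≤ s) (hst : s ≤ t) :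
    ∫ x in s..t, f x ≤ ∫ x in Ici a, f x := by
  rw [intervalIntegral.integral_of_le hst]
  exact setIntegral_mono_set hf (ae_restrict_of_forall_mem measurableSet_Ici hf_nonneg)
    (Ioc_subset_Icc_self.trans (Icc_subset_Ici_self.trans (Ici_subset_Ici.2 has))).eventuallyLE

theorem pseudodifferential_zone_estimate_scattering_general
    {E : Type*} [NormedAddCommGroup E] [NormedSpace ℝ E] {b g g' : ℝ → ℝ}
    (hg : ∀ t ∈ Ici (0 : ℝ), HasDerivWithinAt g (g' t) (Ici 0) t)
    (hg_pos : ∀ t ∈ Ici (0 : ℝ), 0 < g t)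
    (hbg : ∀ t ∈ Ici (0 : ℝ), -1 ≤ b t * g t + g' t)
    (hg_int : IntegrableOn (fun t ↦ (g t)⁻¹) (Ici 0))
    {r s t : ℝ} (hr : 0 ≤ r) (hs : 0 ≤ s) (hst : s ≤ t)
    {v v' : ℝ → E} (hsol : IsDampedSolutionOn b g r v v' (Icc s t)) :
    g t * r * ‖v t‖ + ‖v' t‖ ≤
      Real.exp (∫ τ in Ici 0, (g τ)⁻¹) * (g t / g s) * (g s * r * ‖v s‖ + ‖v' s‖) := by
  have hsub : Icc s t ⊆ Ici 0 := fun τ hτ ↦ hs.trans hτ.1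
  have hgs : 0 < g s := hg_pos s hs
  have hgt : 0 < g t := hg_pos t (hs.trans hst)
  have hexp : Real.exp (∫ τ in s..t, (g τ)⁻¹) ≤ Real.exp (∫ τ in Ici 0, (g τ)⁻¹) :=
    Real.exp_le_exp.2 (intervalIntegral_le_setIntegral_Ici hg_int
      (fun τ hτ ↦ (inv_pos.2 (hg_pos τ hτ)).le) hs hst)
  calc g t * r * ‖v t‖ + ‖v' t‖ = g t * (r * ‖v t‖ + ‖v' t‖ / g t) := by field_simp
    _ ≤ g t * (Real.exp (∫ τ in s..t, (g τ)⁻¹) * (r * ‖v s‖ + ‖v' s‖ / g s)) := by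
      gcongr
      exact hsol.energy_le_exp_integral_mul hst hr (fun τ hτ ↦ (hg τ (hsub hτ)).mono hsub)
        (fun τ hτ ↦ hg_pos τ (hsub hτ)) fun τ hτ ↦ hbg τ (hsub hτ)
    _ ≤ g t * (Real.exp (∫ τ in Ici 0, (g τ)⁻¹) * (r * ‖v s‖ + ‖v' s‖ / g s)) := by gcongr
    _ = _ := by field_simp

/-- Proposition 2.3 of the paper: estimate in the pseudo-differential zone
`Z_pd(N) = {(t,ξ) : G(t)|ξ|² ≤ N}` for the scattering case. -/
theorem pseudodifferential_zone_estimate_scattering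
    (n : ℕ) (hn : 1 ≤ n) (N : ℝ) (hN : 0 < N)
    (b g G : ℝ → ℝ)
    (hg_smooth : ContDiff ℝ 1 g)
    (hg_pos : ∀ t : ℝ, 0 ≤ t → 0 < g t)
    (hg_deriv_pos : ∀ t : ℝ, 0 ≤ t → 0 < deriv g t)
    (hg_int : IntegrableOn (fun t => (g t)⁻¹) (Set.Ici (0 : ℝ)))
    (hb_smooth : ContDiff ℝ 1 b)
    (hb_pos : ∀ t : ℝ, 0 ≤ t → 0 < b t)
    (hb_deriv_neg : ∀ t : ℝ, 0 ≤ t → deriv b t < 0)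
    (hb_int : IntegrableOn b (Set.Ici (0 : ℝ)))
    (hG : ∀ t : ℝ, G t = (1 / 2) * ∫ τ in (0 : ℝ)..t, g τ) :
    ∃ C : ℝ, 0 < C ∧
      ∀ (ξ : EuclideanSpace ℝ (Fin n)) (s t : ℝ), 0 ≤ s → s ≤ t →
        G t * ‖ξ‖ ^ 2 ≤ N →
        ∀ v : ℝ → ℂ, ContDiff ℝ 2 v →
          (∀ τ ∈ Set.Icc s t,
            deriv (deriv v) τ + ((‖ξ‖ ^ 2 : ℝ) : ℂ) * v τ +
              ((b τ + g τ * ‖ξ‖ ^ 2 : ℝ) : ℂ) * deriv v τ = 0) →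
          g t * ‖ξ‖ ^ 2 * ‖v t‖ + ‖deriv v t‖ ≤
            C * (g t / g s) * (g s * ‖ξ‖ ^ 2 * ‖v s‖ + ‖deriv v s‖) :=
  ⟨Real.exp (∫ τ in Ici 0, (g τ)⁻¹), Real.exp_pos _, fun _ _ _ hs hst _ _ hv hode ↦
    pseudodifferential_zone_estimate_scattering_general
      (fun t _ ↦ (hg_smooth.differentiable one_ne_zero t).hasDerivAt.hasDerivWithinAt) hg_pos
      (fun t ht ↦ by linarith [mul_pos (hb_pos t ht) (hg_pos t ht), hg_deriv_pos t ht])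
      hg_int (sq_nonneg _) hs hst (.of_contDiff hv hode)⟩
end

section
/- Let b, h : [0,∞) → ℝ be continuous and nonnegative, let K ≥ 0 with h(t) ≤ K·b(t) for all t ≥ 0, let c ∈ (0,1) with (1+K)c < 1, and let t₀ > 0 be such that t·b(t) ≤ c for all t ≥ t₀. Define δ(t) = exp(∫₀ᵗ (b(τ)+h(τ)) dτ). Then: (i) there is a constant C > 0, depending only on c, K, t₀ and b restricted to [0,t₀] (in particular independent of h subject to h ≤ Kb), such that for all t ≥ t₀, t/δ(t) ≤ ∫₀ᵗ 1/δ(τ) dτ ≤ C·t/δ(t); and (ii) the function t ↦ t/δ(t) is strictly increasing on [t₀,∞), since d/dt (t/δ(t)) = (1 − t(b(t)+h(t)))/δ(t) > 0 for t ≥ t₀. -/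
open MeasureTheory Filter

/-!
Put `q = b + h` and `F t = t / δ t`, so that `F' = (1 - t q) / δ`. For `t ≥ t₀` the hypotheses give
`t q t ≤ κ := (1 + K) c < 1`; hence `F` increases there, and `(1 - κ) / δ ≤ F'` integrates to
`∫_{t₀}^t 1/δ ≤ F t / (1 - κ)`. On `[0, t₀]` one has `δ ≥ 1`, so this part of the integral is at
most `t₀ = δ t₀ * F t₀ ≤ δ t₀ * F t`, and `δ t₀` is bounded independently of `h` because
`q ≤ (1 + K) b`. The lower bound holds because `1/δ` is decreasing.
-/

theorem mul_add_le_one_add_mul {R : Type*} [CommSemiring R] [PartialOrder R] [IsOrderedRing R]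
    {t x y K c : R} (ht : 0 ≤ t) (hK : 0 ≤ 1 + K) (hy : y ≤ K * x) (hx : t * x ≤ c) :
    t * (x + y) ≤ (1 + K) * c :=
  calc t * (x + y) ≤ t * (x + K * x) := by gcongr
    _ = (1 + K) * (t * x) := by ring
    _ ≤ (1 + K) * c := by gcongr

/-- The auxiliary function `δ(t) = exp (∫₀ᵗ q)` attached to a dissipation coefficient `q`. It is
defined for all real `t` through the oriented integral; only `t ≥ 0` is of interest. -/
noncomputable def dissipationWeight (q : ℝ → ℝ) (t : ℝ) : ℝ :=
  Real.exp (∫ τ in (0 : ℝ)..t, q τ)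

namespace dissipationWeight

variable {p q : ℝ → ℝ} {s t κ : ℝ} {S : Set ℝ}

theorem pos (q : ℝ → ℝ) (t : ℝ) : 0 < dissipationWeight q t :=
  Real.exp_pos _

theorem apply_zero (q : ℝ → ℝ) : dissipationWeight q 0 = 1 := by
  simp [dissipationWeight]

theorem le_of_le_on_Icc (ht : 0 ≤ t) (hp : IntervalIntegrable p volume 0 t)
    (hq : IntervalIntegrable q volume 0 t) (hpq : ∀ τ ∈ Set.Icc 0 t, p τ ≤ q τ) :
    dissipationWeight p t ≤ dissipationWeight q t :=
  Real.exp_le_exp.2 (intervalIntegral.integral_mono_on ht hp hq hpq)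

theorem hasDerivAt (hq : Continuous q) (t : ℝ) :
    HasDerivAt (dissipationWeight q) (dissipationWeight q t * q t) t :=
  (hq.integral_hasStrictDerivAt 0 t).hasDerivAt.exp

theorem continuous (hq : Continuous q) : Continuous (dissipationWeight q) :=
  continuous_iff_continuousAt.2 fun t => (hasDerivAt hq t).continuousAt

theorem continuous_inv (hq : Continuous q) : Continuous fun t => (dissipationWeight q t)⁻¹ :=
  (continuous hq).inv₀ fun t => (pos q t).ne'

theorem monotoneOn (hq : Continuous q) (hS : Convex ℝ S) (hq_nonneg : ∀ t ∈ S, 0 ≤ q t) :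
    MonotoneOn (dissipationWeight q) S :=
  monotoneOn_of_hasDerivWithinAt_nonneg hS (continuous hq).continuousOn
    (fun t _ => (hasDerivAt hq t).hasDerivWithinAt)
    (fun t ht => mul_nonneg (pos q t).le (hq_nonneg t (interior_subset ht)))

theorem hasDerivAt_id_div (hq : Continuous q) (t : ℝ) :
    HasDerivAt (fun x => x / dissipationWeight q x) ((1 - t * q t) / dissipationWeight q t) t := by
  have hδ := (pos q t).ne'
  refine ((hasDerivAt_id t).div (hasDerivAt hq t) hδ).congr_deriv ?_
  simp only [id]
  field_simp

theorem strictMonoOn_id_div (hq : Continuous q) (hS : Convex ℝ S) (hq_lt : ∀ t ∈ S, t * q t < 1) :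
    StrictMonoOn (fun x => x / dissipationWeight q x) S :=
  strictMonoOn_of_hasDerivWithinAt_pos hS
    (fun t _ => (hasDerivAt_id_div hq t).continuousAt.continuousWithinAt)
    (fun t _ => (hasDerivAt_id_div hq t).hasDerivWithinAt)
    (fun t ht => div_pos (sub_pos.2 (hq_lt t (interior_subset ht))) (pos q t))

theorem div_le_integral_inv (hq : Continuous q) (ht : 0 ≤ t)
    (hq_nonneg : ∀ τ ∈ Set.Icc 0 t, 0 ≤ q τ) :
    t / dissipationWeight q t ≤ ∫ τ in (0 : ℝ)..t, (dissipationWeight q τ)⁻¹ := by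
  have hmono := monotoneOn hq (convex_Icc 0 t) hq_nonneg
  calc t / dissipationWeight q t = ∫ _ in (0 : ℝ)..t, (dissipationWeight q t)⁻¹ := by
        simp [div_eq_mul_inv]
    _ ≤ ∫ τ in (0 : ℝ)..t, (dissipationWeight q τ)⁻¹ :=
        intervalIntegral.integral_mono_on ht intervalIntegrable_const
          ((continuous_inv hq).intervalIntegrable _ _)
          fun τ hτ => inv_anti₀ (pos q τ) (hmono hτ (Set.right_mem_Icc.2 ht) hτ.2)

theorem integral_inv_le_self (hq : Continuous q) (ht : 0 ≤ t)
    (hq_nonneg : ∀ τ ∈ Set.Icc 0 t, 0 ≤ q τ) :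
    ∫ τ in (0 : ℝ)..t, (dissipationWeight q τ)⁻¹ ≤ t := by
  have one_le : ∀ τ ∈ Set.Icc 0 t, 1 ≤ dissipationWeight q τ := fun τ hτ =>
    apply_zero q ▸ monotoneOn hq (convex_Icc 0 t) hq_nonneg (Set.left_mem_Icc.2 ht) hτ hτ.1
  calc ∫ τ in (0 : ℝ)..t, (dissipationWeight q τ)⁻¹ ≤ ∫ _ in (0 : ℝ)..t, (1 : ℝ) :=
        intervalIntegral.integral_mono_on ht ((continuous_inv hq).intervalIntegrable _ _)
          intervalIntegrable_const fun τ hτ => inv_le_one_of_one_le₀ (one_le τ hτ)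
    _ = t := by simp

theorem mul_integral_inv_le_sub (hq : Continuous q) (hst : s ≤ t)
    (hκ : ∀ τ ∈ Set.Icc s t, τ * q τ ≤ κ) :
    (1 - κ) * ∫ τ in s..t, (dissipationWeight q τ)⁻¹ ≤
      t / dissipationWeight q t - s / dissipationWeight q s := by
  have hderiv_cont : Continuous fun τ => (1 - τ * q τ) / dissipationWeight q τ :=
    (by fun_prop : Continuous fun τ => 1 - τ * q τ).div (continuous hq) fun τ => (pos q τ).ne'
  calc (1 - κ) * ∫ τ in s..t, (dissipationWeight q τ)⁻¹
      = ∫ τ in s..t, (1 - κ) / dissipationWeight q τ := by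
        simp only [div_eq_mul_inv, intervalIntegral.integral_const_mul]
    _ ≤ ∫ τ in s..t, (1 - τ * q τ) / dissipationWeight q τ :=
        intervalIntegral.integral_mono_on hst
          (((continuous_inv hq).const_mul (1 - κ)).intervalIntegrable _ _)
          (hderiv_cont.intervalIntegrable _ _) fun τ hτ =>
            div_le_div_of_nonneg_right (sub_le_sub_left (hκ τ hτ) 1) (pos q τ).le
    _ = t / dissipationWeight q t - s / dissipationWeight q s :=
        intervalIntegral.integral_eq_sub_of_hasDerivAt (fun τ _ => hasDerivAt_id_div hq τ)
          (hderiv_cont.intervalIntegrable _ _)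

theorem integral_inv_le_mul_div (hq : Continuous q) (hs : 0 ≤ s) (hst : s ≤ t)
    (hq_nonneg : ∀ τ ∈ Set.Icc 0 s, 0 ≤ q τ) (hκ : ∀ τ ∈ Set.Icc s t, τ * q τ ≤ κ) (hκ1 : κ < 1) :
    ∫ τ in (0 : ℝ)..t, (dissipationWeight q τ)⁻¹ ≤
      ((1 - κ)⁻¹ + dissipationWeight q s) * (t / dissipationWeight q t) := by
  have hint : ∀ x y, IntervalIntegrable (fun τ => (dissipationWeight q τ)⁻¹) volume x y :=
    (continuous_inv hq).intervalIntegrable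
  have head_le : ∫ τ in (0 : ℝ)..s, (dissipationWeight q τ)⁻¹ ≤
      dissipationWeight q s * (t / dissipationWeight q t) :=
    calc ∫ τ in (0 : ℝ)..s, (dissipationWeight q τ)⁻¹ ≤ s := integral_inv_le_self hq hs hq_nonneg
      _ = dissipationWeight q s * (s / dissipationWeight q s) :=
          (mul_div_cancel₀ s (pos q s).ne').symm
      _ ≤ dissipationWeight q s * (t / dissipationWeight q t) :=
          mul_le_mul_of_nonneg_left
            ((strictMonoOn_id_div hq (convex_Icc s t) fun τ hτ => (hκ τ hτ).trans_lt hκ1).monotoneOn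
              (Set.left_mem_Icc.2 hst) (Set.right_mem_Icc.2 hst) hst)
            (pos q s).le
  have tail_le : ∫ τ in s..t, (dissipationWeight q τ)⁻¹ ≤
      (1 - κ)⁻¹ * (t / dissipationWeight q t) :=
    (le_inv_mul_iff₀ (sub_pos.2 hκ1)).2 <|
      (mul_integral_inv_le_sub hq hst hκ).trans (sub_le_self _ (div_nonneg hs (pos q s).le))
  rw [← intervalIntegral.integral_add_adjacent_intervals (hint 0 s) (hint s t), add_mul]
  linarith

theorem integral_inv_le_mul_div_of_le (hp : IntervalIntegrable p volume 0 s) (hq : Continuous q)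
    (hs : 0 ≤ s) (hst : s ≤ t) (hq_nonneg : ∀ τ ∈ Set.Icc 0 s, 0 ≤ q τ)
    (hqp : ∀ τ ∈ Set.Icc 0 s, q τ ≤ p τ) (hκ : ∀ τ ∈ Set.Icc s t, τ * q τ ≤ κ) (hκ1 : κ < 1) :
    ∫ τ in (0 : ℝ)..t, (dissipationWeight q τ)⁻¹ ≤
      ((1 - κ)⁻¹ + dissipationWeight p s) * (t / dissipationWeight q t) := by
  have hF : 0 ≤ t / dissipationWeight q t := div_nonneg (hs.trans hst) (pos q t).le
  refine (integral_inv_le_mul_div hq hs hst hq_nonneg hκ hκ1).trans ?_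
  gcongr
  exact le_of_le_on_Icc hs (hq.intervalIntegrable _ _) hp hqp

end dissipationWeight

/-- The lemma after Proposition 3.8 of the paper, used in the dissipative zone: with
`δ(t) = exp(∫₀ᵗ (b+h))` one has `∫₀ᵗ dτ/δ(τ) ∼ t/δ(t)`, and `t/δ(t)` is strictly
increasing for `t ≥ t₀`. -/
theorem dissipative_zone_delta_asymptotics
    (b : ℝ → ℝ) (hb_cont : Continuous b) (hb_nonneg : ∀ t : ℝ, 0 ≤ t → 0 ≤ b t)
    (K : ℝ) (hK : 0 ≤ K) (c : ℝ) (hc : c ∈ Set.Ioo (0 : ℝ) 1)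
    (hKc : (1 + K) * c < 1)
    (t₀ : ℝ) (ht₀ : 0 < t₀) (htb : ∀ t : ℝ, t₀ ≤ t → t * b t ≤ c) :
    ∃ C : ℝ, 0 < C ∧
      ∀ h : ℝ → ℝ, Continuous h → (∀ t : ℝ, 0 ≤ t → 0 ≤ h t) →
        (∀ t : ℝ, 0 ≤ t → h t ≤ K * b t) →
        (∀ t : ℝ, t₀ ≤ t →
          t / Real.exp (∫ τ in (0 : ℝ)..t, (b τ + h τ)) ≤
              (∫ τ in (0 : ℝ)..t, (Real.exp (∫ θ in (0 : ℝ)..τ, (b θ + h θ)))⁻¹) ∧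
            (∫ τ in (0 : ℝ)..t, (Real.exp (∫ θ in (0 : ℝ)..τ, (b θ + h θ)))⁻¹) ≤
              C * (t / Real.exp (∫ τ in (0 : ℝ)..t, (b τ + h τ)))) ∧
        StrictMonoOn (fun x => x / Real.exp (∫ τ in (0 : ℝ)..x, (b τ + h τ))) (Set.Ici t₀) ∧
        ∀ t : ℝ, t₀ ≤ t →
          HasDerivAt (fun x => x / Real.exp (∫ τ in (0 : ℝ)..x, (b τ + h τ)))
              ((1 - t * (b t + h t)) / Real.exp (∫ τ in (0 : ℝ)..t, (b τ + h τ))) t ∧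
            0 < (1 - t * (b t + h t)) / Real.exp (∫ τ in (0 : ℝ)..t, (b τ + h τ)) := by
  refine ⟨(1 - (1 + K) * c)⁻¹ + dissipationWeight (fun τ => (1 + K) * b τ) t₀,
    add_pos (inv_pos.2 (sub_pos.2 hKc)) (dissipationWeight.pos _ _),
    fun h hh_cont hh_nonneg hhK => ?_⟩
  have hq : Continuous fun τ => b τ + h τ := hb_cont.add hh_cont
  have hq_nonneg : ∀ t, 0 ≤ t → 0 ≤ b t + h t := fun t ht =>
    add_nonneg (hb_nonneg t ht) (hh_nonneg t ht)
  have hq_le : ∀ t, 0 ≤ t → b t + h t ≤ (1 + K) * b t := fun t ht => by linarith [hhK t ht]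
  have hq_zone : ∀ t, t₀ ≤ t → t * (b t + h t) ≤ (1 + K) * c := fun t ht =>
    have ht_nonneg : 0 ≤ t := ht₀.le.trans ht
    mul_add_le_one_add_mul ht_nonneg (by linarith) (hhK t ht_nonneg) (htb t ht)
  have hq_lt : ∀ t, t₀ ≤ t → t * (b t + h t) < 1 := fun t ht => (hq_zone t ht).trans_lt hKc
  refine ⟨fun t ht => ⟨?lower, ?upper⟩,
    dissipationWeight.strictMonoOn_id_div hq (convex_Ici t₀) hq_lt, fun t ht =>
      ⟨dissipationWeight.hasDerivAt_id_div hq t,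
        div_pos (sub_pos.2 (hq_lt t ht)) (dissipationWeight.pos _ t)⟩⟩
  case lower =>
    exact dissipationWeight.div_le_integral_inv hq (ht₀.le.trans ht) fun τ hτ => hq_nonneg τ hτ.1
  case upper =>
    exact dissipationWeight.integral_inv_le_mul_div_of_le
      ((hb_cont.const_mul (1 + K)).intervalIntegrable _ _) hq ht₀.le ht
      (fun τ hτ => hq_nonneg τ hτ.1) (fun τ hτ => hq_le τ hτ.1) (fun τ hτ => hq_zone τ hτ.1) hKc
end

section
/- Let t₀ ∈ ℝ and t₀ < T₀ ≤ ∞. Let E : [t₀,T₀) → [0,∞) be differentiable and non-increasing, and let f : [t₀,T₀) → [0,∞) be continuous with f·E integrable on [t₀,T₀). Suppose there is C > 0 such that ∫ₛ^{T₀} f(τ)E(τ) dτ ≤ C·E(s) for all s ∈ [t₀,T₀). Then for every ε ∈ (0,1) and every t ∈ [t₀,T₀) one has E(t) ≤ (E(t₀)/(1−ε))·exp( −(ε/C) ∫_{t₀}ᵗ f(τ) dτ ). -/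
open MeasureTheory Filter

/-!
Fix `t` and put `W s = (1 - ε) * E t + (ε / C) * ∫ τ in s..t, f τ * E τ`. For `s ≤ t` we have
`W s ≤ E s`: monotonicity of `E` bounds the first term by `(1 - ε) * E s`, and the integral
hypothesis bounds the second by `ε * E s`. Hence `W' = -(ε / C) * f * E ≤ -(ε / C) * f * W`, and
Grönwall's inequality yields `(1 - ε) * E t = W t ≤ W t₀ * exp (-(ε / C) * ∫ f)` with `W t₀ ≤ E t₀`.
As `W` is absolutely continuous, the differential inequality is only needed almost everywhere.
-/

section AbsolutelyContinuous

variable {a b : ℝ}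

theorem absolutelyContinuousOnInterval_comp_of_lipschitzOnWith {X Y : Type*}
    [PseudoMetricSpace X] [PseudoMetricSpace Y] {φ : X → Y} {u : ℝ → X} {K : NNReal}
    (hφ : LipschitzOnWith K φ (u '' Set.uIcc a b)) (hu : AbsolutelyContinuousOnInterval u a b) :
    AbsolutelyContinuousOnInterval (φ ∘ u) a b := by
  rw [absolutelyContinuousOnInterval_iff] at hu ⊢
  intro ε hε
  obtain ⟨δ, hδ, hu⟩ := hu (ε / (K + 1)) (by positivity)
  refine ⟨δ, hδ, fun I hI hIδ ↦ ?_⟩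
  calc ∑ i ∈ Finset.range I.1, dist (φ (u (I.2 i).1)) (φ (u (I.2 i).2))
      ≤ ∑ i ∈ Finset.range I.1, (K + 1) * dist (u (I.2 i).1) (u (I.2 i).2) := by
        refine Finset.sum_le_sum fun i hi ↦ ?_
        obtain ⟨hleft, hright⟩ := hI.1 i hi
        refine (hφ.dist_le_mul _ (Set.mem_image_of_mem u hleft) _
          (Set.mem_image_of_mem u hright)).trans ?_
        gcongr
        exact le_add_of_nonneg_right zero_le_one
    _ = (K + 1) * ∑ i ∈ Finset.range I.1, dist (u (I.2 i).1) (u (I.2 i).2) :=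
        (Finset.mul_sum ..).symm
    _ < (K + 1) * (ε / (K + 1)) := by
        gcongr
        exact hu I hI hIδ
    _ = ε := mul_div_cancel₀ ε (by positivity)

theorem absolutelyContinuousOnInterval_comp_of_contDiff {F : Type*} [NormedAddCommGroup F]
    [NormedSpace ℝ F] {φ : ℝ → F} {u : ℝ → ℝ} (hφ : ContDiff ℝ 1 φ)
    (hu : AbsolutelyContinuousOnInterval u a b) :
    AbsolutelyContinuousOnInterval (φ ∘ u) a b := by
  have hcompact : IsCompact (u '' Set.uIcc a b) :=
    isCompact_uIcc.image_of_continuousOn hu.continuousOn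
  have hconvex : Convex ℝ (u '' Set.uIcc a b) :=
    (isPreconnected_uIcc.image u hu.continuousOn).ordConnected.convex
  obtain ⟨K, hK⟩ := hφ.contDiffOn.exists_lipschitzOnWith one_ne_zero hconvex hcompact
  exact absolutelyContinuousOnInterval_comp_of_lipschitzOnWith hK hu

theorem le_of_ae_deriv_nonpos {u : ℝ → ℝ} (hab : a ≤ b) (hu : AbsolutelyContinuousOnInterval u a b)
    (hu' : ∀ᵐ x, x ∈ Set.Icc a b → deriv u x ≤ 0) : u b ≤ u a := by
  rw [← sub_nonpos, ← hu.integral_deriv_eq_sub, intervalIntegral.integral_of_le hab]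
  refine setIntegral_nonpos_ae measurableSet_Ioc ?_
  filter_upwards [hu'] with x hx hxab using hx (Set.Ioc_subset_Icc_self hxab)

theorem le_mul_exp_integral_of_ae_deriv_le_mul {w k : ℝ → ℝ} (hab : a ≤ b)
    (hw : AbsolutelyContinuousOnInterval w a b) (hk : IntervalIntegrable k volume a b)
    (hw' : ∀ᵐ x, x ∈ Set.Icc a b → deriv w x ≤ k x * w x) :
    w b ≤ w a * Real.exp (∫ τ in a..b, k τ) := by
  set μ : ℝ → ℝ := fun x ↦ Real.exp (-∫ τ in a..x, k τ) with hμ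
  have hμ_ac : AbsolutelyContinuousOnInterval μ a b :=
    absolutelyContinuousOnInterval_comp_of_contDiff (φ := fun y ↦ Real.exp (-y)) (by fun_prop)
      (hk.absolutelyContinuousOnInterval_intervalIntegral Set.left_mem_uIcc)
  have hderiv : ∀ᵐ x, x ∈ Set.Icc a b → deriv (w * μ) x ≤ 0 := by
    filter_upwards [hw', hw.ae_differentiableAt, hk.ae_hasDerivAt_integral]
      with x hwx hw_diff hk_deriv hx
    have hx' : x ∈ Set.uIcc a b := by rwa [Set.uIcc_of_le hab]
    have hμ_deriv : HasDerivAt μ (μ x * -k x) x := (hk_deriv hx' a Set.left_mem_uIcc).neg.exp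
    rw [((hw_diff hx').hasDerivAt.mul hμ_deriv).deriv]
    calc deriv w x * μ x + w x * (μ x * -k x) = (deriv w x - k x * w x) * μ x := by ring
      _ ≤ 0 := mul_nonpos_of_nonpos_of_nonneg (sub_nonpos.2 (hwx hx)) (Real.exp_pos _).le
  have hdecay : w b * μ b ≤ w a * μ a := le_of_ae_deriv_nonpos hab (hw.mul hμ_ac) hderiv
  simpa [hμ, Real.exp_neg, ← div_eq_mul_inv, div_le_iff₀ (Real.exp_pos _)] using hdecay

theorem sub_integral_le_mul_exp_neg_integral {c : ℝ} {h k : ℝ → ℝ} (hab : a ≤ b)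
    (hh : IntervalIntegrable h volume a b) (hk : IntervalIntegrable k volume a b)
    (hkh : ∀ᵐ x, x ∈ Set.Icc a b → k x * (c - ∫ τ in a..x, h τ) ≤ h x) :
    c - ∫ τ in a..b, h τ ≤ c * Real.exp (-∫ τ in a..b, k τ) := by
  set w : ℝ → ℝ := fun x ↦ c - ∫ τ in a..x, h τ with hw
  have hw_ac : AbsolutelyContinuousOnInterval w a b :=
    absolutelyContinuousOnInterval_comp_of_contDiff (φ := fun y ↦ c - y) (by fun_prop)
      (hh.absolutelyContinuousOnInterval_intervalIntegral Set.left_mem_uIcc)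
  have hw' : ∀ᵐ x, x ∈ Set.Icc a b → deriv w x ≤ -k x * w x := by
    filter_upwards [hkh, hh.ae_hasDerivAt_integral] with x hkhx hh_deriv hx
    rw [((hh_deriv (by rwa [Set.uIcc_of_le hab]) a Set.left_mem_uIcc).const_sub c).deriv, neg_mul]
    exact neg_le_neg (hkhx hx)
  simpa [hw] using le_mul_exp_integral_of_ae_deriv_le_mul hab hw_ac hk.neg hw'

end AbsolutelyContinuous

theorem intervalIntegrable_mul_of_antitoneOn {μ : Measure ℝ} [IsFiniteMeasureOnCompacts μ]
    {f g : ℝ → ℝ} {a b : ℝ} (hf : IntervalIntegrable f μ a b) (hg : AntitoneOn g (Set.uIcc a b)) :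
    IntervalIntegrable (fun x ↦ f x * g x) μ a b := by
  have hg_top : MemLp g ⊤ (μ.restrict (Set.uIoc a b)) :=
    (hg.memLp_isCompact isCompact_uIcc).mono_measure
      (Measure.restrict_mono Set.uIoc_subset_uIcc le_rfl)
  rw [intervalIntegrable_iff] at hf ⊢
  exact hf.mul_of_top_left hg_top

theorem intervalIntegral_le_setIntegral {μ : Measure ℝ} {g : ℝ → ℝ} {S : Set ℝ} {s b : ℝ}
    (hsb : s ≤ b) (hS : MeasurableSet S) (hsub : Set.Ioc s b ⊆ S) (hg : IntegrableOn g S μ)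
    (hg_nonneg : ∀ x ∈ S, 0 ≤ g x) : ∫ x in s..b, g x ∂μ ≤ ∫ x in S, g x ∂μ := by
  rw [intervalIntegral.integral_of_le hsb]
  exact setIntegral_mono_set hg (ae_restrict_of_forall_mem hS hg_nonneg) hsub.eventuallyLE

theorem gronwall_type_energy_decay_general {a b : ℝ} (hab : a ≤ b) {E f : ℝ → ℝ}
    (hE_anti : AntitoneOn E (Set.Icc a b)) (hf_int : IntervalIntegrable f volume a b)
    (hf_nonneg : ∀ x ∈ Set.Icc a b, 0 ≤ f x) {C : ℝ} (hC : 0 < C)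
    (hbound : ∀ s ∈ Set.Icc a b, ∫ τ in s..b, f τ * E τ ≤ C * E s)
    {ε : ℝ} (hε : 0 ≤ ε) (hε1 : ε < 1) :
    E b ≤ E a / (1 - ε) * Real.exp (-(ε / C) * ∫ τ in a..b, f τ) := by
  have hfE_int : IntervalIntegrable (fun τ ↦ f τ * E τ) volume a b :=
    intervalIntegrable_mul_of_antitoneOn hf_int (by rwa [Set.uIcc_of_le hab])
  set W : ℝ → ℝ := fun s ↦ (1 - ε) * E b + ε / C * ∫ τ in s..b, f τ * E τ with hW
  have hW_le : ∀ s ∈ Set.Icc a b, W s ≤ E s := fun s hs ↦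
    calc W s ≤ (1 - ε) * E s + ε / C * (C * E s) :=
          add_le_add
            (mul_le_mul_of_nonneg_left (hE_anti hs (Set.right_mem_Icc.2 hab) hs.2)
              (sub_nonneg.2 hε1.le))
            (mul_le_mul_of_nonneg_left (hbound s hs) (div_nonneg hε hC.le))
      _ = E s := by field_simp; ring
  have hW_eq : ∀ s ∈ Set.Icc a b, W s = W a - ∫ τ in a..s, ε / C * (f τ * E τ) := fun s hs ↦ by
    have hfE_int_s := hfE_int.mono_set (Set.uIcc_subset_uIcc_left (Set.Icc_subset_uIcc hs))
    simp only [hW, intervalIntegral.integral_const_mul,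
      ← intervalIntegral.integral_interval_sub_left hfE_int hfE_int_s]
    ring
  have hW_decay : W b ≤ W a * Real.exp (-∫ τ in a..b, ε / C * f τ) := by
    rw [hW_eq b (Set.right_mem_Icc.2 hab)]
    refine sub_integral_le_mul_exp_neg_integral hab (hfE_int.const_mul _) (hf_int.const_mul _)
      (ae_of_all _ fun s hs ↦ ?_)
    rw [← hW_eq s hs, ← mul_assoc]
    exact mul_le_mul_of_nonneg_left (hW_le s hs)
      (mul_nonneg (div_nonneg hε hC.le) (hf_nonneg s hs))
  rw [div_mul_eq_mul_div, le_div_iff₀' (sub_pos.2 hε1), neg_mul,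
    ← intervalIntegral.integral_const_mul]
  calc (1 - ε) * E b = W b := by simp [hW]
    _ ≤ W a * Real.exp (-∫ τ in a..b, ε / C * f τ) := hW_decay
    _ ≤ E a * Real.exp (-∫ τ in a..b, ε / C * f τ) :=
        mul_le_mul_of_nonneg_right (hW_le a (Set.left_mem_Icc.2 hab)) (Real.exp_pos _).le

theorem ordConnected_setOf_le_and_coe_lt (t₀ : ℝ) (T₀ : EReal) :
    {x : ℝ | t₀ ≤ x ∧ (x : EReal) < T₀}.OrdConnected :=
  ⟨fun _ hx _ hy _ hz ↦ ⟨hx.1.trans hz.1, (EReal.coe_le_coe_iff.2 hz.2).trans_lt hy.2⟩⟩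

/-- Lemma `Lemma:Effective-integrable-EM7-Zdiss` of the paper (from
[JuniordaLuzNoneffective, Lemma 2.1]): a Gronwall-type lemma converting integral
energy bounds into exponential decay. -/
theorem gronwall_type_energy_decay
    (t₀ : ℝ) (T₀ : EReal) (hT : (t₀ : EReal) < T₀)
    (E f : ℝ → ℝ)
    (hE_diff : DifferentiableOn ℝ E {x : ℝ | t₀ ≤ x ∧ (x : EReal) < T₀})
    (hE_nonneg : ∀ x : ℝ, t₀ ≤ x → (x : EReal) < T₀ → 0 ≤ E x)
    (hE_anti : AntitoneOn E {x : ℝ | t₀ ≤ x ∧ (x : EReal) < T₀})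
    (hf_cont : ContinuousOn f {x : ℝ | t₀ ≤ x ∧ (x : EReal) < T₀})
    (hf_nonneg : ∀ x : ℝ, t₀ ≤ x → (x : EReal) < T₀ → 0 ≤ f x)
    (hfE_int : IntegrableOn (fun τ => f τ * E τ) {x : ℝ | t₀ ≤ x ∧ (x : EReal) < T₀})
    (C : ℝ) (hC : 0 < C)
    (hbound : ∀ s : ℝ, t₀ ≤ s → (s : EReal) < T₀ →
      (∫ τ in {x : ℝ | s ≤ x ∧ (x : EReal) < T₀}, f τ * E τ) ≤ C * E s) :
    ∀ ε : ℝ, 0 < ε → ε < 1 →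
      ∀ t : ℝ, t₀ ≤ t → (t : EReal) < T₀ →
        E t ≤ (E t₀ / (1 - ε)) * Real.exp (-(ε / C) * ∫ τ in t₀..t, f τ) := by
  intro ε hε hε1 t ht htT
  have hIcc : Set.Icc t₀ t ⊆ {x : ℝ | t₀ ≤ x ∧ (x : EReal) < T₀} :=
    (ordConnected_setOf_le_and_coe_lt t₀ T₀).out ⟨le_rfl, hT⟩ ⟨ht, htT⟩
  refine gronwall_type_energy_decay_general ht (hE_anti.mono hIcc)
    ((hf_cont.mono hIcc).intervalIntegrable_of_Icc ht)
    (fun x hx ↦ hf_nonneg x (hIcc hx).1 (hIcc hx).2) hC (fun s hs ↦ ?_) hε.le hε1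
  have htail : {x : ℝ | s ≤ x ∧ (x : EReal) < T₀} ⊆ {x : ℝ | t₀ ≤ x ∧ (x : EReal) < T₀} :=
    fun x hx ↦ ⟨hs.1.trans hx.1, hx.2⟩
  refine (intervalIntegral_le_setIntegral hs.2
    (ordConnected_setOf_le_and_coe_lt s T₀).measurableSet ?_ (hfE_int.mono_set htail) ?_).trans
    (hbound s hs.1 (hIcc hs).2)
  · exact fun x hx ↦ ⟨hx.1.le, (hIcc ⟨hs.1.trans hx.1.le, hx.2⟩).2⟩
  · exact fun x hx ↦ mul_nonneg (hf_nonneg x (htail hx).1 hx.2) (hE_nonneg x (htail hx).1 hx.2)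
end

section
/- Let ρ > 0, let [t₁,t₂] ⊂ ℝ be a compact interval, let b̃ : [t₁,t₂] → (0,∞) be continuous, and let v : [t₁,t₂] → ℂ be twice continuously differentiable with v''(t) + ρ²v(t) + b̃(t)v'(t) = 0 on [t₁,t₂]. Let K : [t₁,t₂] → [0,∞) be C¹ and suppose there are λ₁, λ₂, λ₃ ≥ 0 with K(t) ≤ λ₁ b̃(t), b̃(t)K(t) ≤ λ₂ ρ², and K'(t)² ≤ λ₃ b̃(t) K(t) ρ² for all t ∈ [t₁,t₂]. Define E(t) = ½( |v'(t)|² + ρ²|v(t)|² ). Then there is a constant C > 0, depending only on λ₁, λ₂, λ₃, such that for all t₁ ≤ s ≤ t ≤ t₂: ∫ₛᵗ K(θ) ρ² |v(θ)|² dθ ≤ C·E(s). -/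
open MeasureTheory Filter

/-!
Along a solution of `v'' + ρ² v + b v' = 0` the energy `E` satisfies `E' = -b ‖v'‖²`, while
`(K ⟪v, v'⟫)' = K' ⟪v, v'⟫ + K ‖v'‖² - K ρ² ‖v‖² - b K ⟪v, v'⟫`. Young's inequality and
the three conditions on the multiplier bound the sum of the terms other than `-K ρ² ‖v‖²` by
`K ρ² ‖v‖² / 2 + Λ b ‖v'‖²`, where `Λ = λ₁ + λ₂ + λ₃`, so `F = 2 (K ⟪v, v'⟫ + Λ E)` satisfies
`F' ≤ -K ρ² ‖v‖²`. The first two conditions give `|2 K ⟪v, v'⟫| ≤ Λ E`, that is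
`0 ≤ Λ E ≤ F ≤ 3 Λ E`, and integrating `F'` over `[s, t]` yields the bound with constant `3 Λ`.
-/

open scoped RealInnerProductSpace

theorem integral_le_sub_of_hasDerivWithinAt_le_neg {f f' g : ℝ → ℝ} {s t : ℝ} (hst : s ≤ t)
    (hf : ∀ θ ∈ Set.Icc s t, HasDerivWithinAt f (f' θ) (Set.Icc s t) θ)
    (hg : IntegrableOn g (Set.Icc s t)) (hle : ∀ θ ∈ Set.Ioo s t, f' θ ≤ -g θ) :
    ∫ θ in s..t, g θ ≤ f s - f t := by
  have hderiv_right : ∀ θ ∈ Set.Ioo s t,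
      HasDerivWithinAt (fun τ ↦ -f τ) (-f' θ) (Set.Ioi θ) θ := fun θ hθ ↦
    ((hf θ (Set.Ioo_subset_Icc_self hθ)).hasDerivAt
      (Icc_mem_nhds hθ.1 hθ.2)).neg.hasDerivWithinAt
  have hbound : ∫ θ in s..t, g θ ≤ -f t - -f s :=
    intervalIntegral.integral_le_sub_of_hasDeriv_right_of_le hst
      (fun θ hθ ↦ (hf θ hθ).continuousWithinAt.neg) hderiv_right hg
      (fun θ hθ ↦ le_neg_of_le_neg (hle θ hθ))
  rwa [neg_sub_neg] at hbound

section NormedSpace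

variable {E : Type*} [NormedAddCommGroup E]

/-- The energy of an oscillator of frequency `ρ` at position `x` with velocity `y`. -/
noncomputable def oscillatorEnergy (ρ : ℝ) (x y : E) : ℝ :=
  1 / 2 * (‖y‖ ^ 2 + ρ ^ 2 * ‖x‖ ^ 2)

theorem oscillatorEnergy_nonneg (ρ : ℝ) (x y : E) : 0 ≤ oscillatorEnergy ρ x y := by
  unfold oscillatorEnergy
  positivity

variable [NormedSpace ℝ E]

/-- On the set `I`, the function `v` has derivative `v'` and solves the damped oscillator equation
`v'' + ρ² v + b v' = 0`. Derivatives are taken within `I`, hence one-sided at the endpoints of a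
compact interval. -/
structure IsDampedOscillation (ρ : ℝ) (b : ℝ → ℝ) (v v' : ℝ → E) (I : Set ℝ) : Prop where
  hasDerivWithinAt : ∀ θ ∈ I, HasDerivWithinAt v (v' θ) I θ
  hasDerivWithinAt_velocity :
    ∀ θ ∈ I, HasDerivWithinAt v' (-(ρ ^ 2 • v θ) - b θ • v' θ) I θ

theorem IsDampedOscillation.of_contDiff {ρ : ℝ} {b : ℝ → ℝ} {v : ℝ → E} {I : Set ℝ}
    (hv : ContDiff ℝ 2 v)
    (hode : ∀ θ ∈ I, deriv (deriv v) θ + ρ ^ 2 • v θ + b θ • deriv v θ = 0) :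
    IsDampedOscillation ρ b v (deriv v) I where
  hasDerivWithinAt θ _ := (hv.differentiable two_ne_zero θ).hasDerivAt.hasDerivWithinAt
  hasDerivWithinAt_velocity θ hθ := by
    have acceleration_eq : deriv (deriv v) θ = -(ρ ^ 2 • v θ) - b θ • deriv v θ := by
      rw [← sub_eq_zero, ← hode θ hθ]
      abel
    rw [← acceleration_eq]
    exact (hv.differentiable_deriv_two θ).hasDerivAt.hasDerivWithinAt

end NormedSpace

section InnerProductSpace

variable {H : Type*} [NormedAddCommGroup H] [InnerProductSpace ℝ H]

theorem abs_mul_inner_le_of_sq_le {α β c : ℝ} (hα : 0 ≤ α) (hβ : 0 ≤ β)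
    (hc : c ^ 2 ≤ 4 * α * β) (x y : H) :
    |c * ⟪x, y⟫| ≤ α * ‖x‖ ^ 2 + β * ‖y‖ ^ 2 := by
  refine abs_le_of_sq_le_sq ?_ (by positivity)
  have inner_sq_le : ⟪x, y⟫ ^ 2 ≤ ‖x‖ ^ 2 * ‖y‖ ^ 2 := by
    rw [← mul_pow, ← sq_abs]
    exact pow_le_pow_left₀ (abs_nonneg _) (abs_real_inner_le_norm x y) 2
  calc (c * ⟪x, y⟫) ^ 2 = c ^ 2 * ⟪x, y⟫ ^ 2 := mul_pow _ _ _
    _ ≤ 4 * α * β * (‖x‖ ^ 2 * ‖y‖ ^ 2) := by gcongr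
    _ = 4 * (α * ‖x‖ ^ 2) * (β * ‖y‖ ^ 2) := by ring
    _ ≤ (α * ‖x‖ ^ 2 + β * ‖y‖ ^ 2) ^ 2 := four_mul_le_sq_add _ _

namespace IsDampedOscillation

variable {ρ θ : ℝ} {b : ℝ → ℝ} {v v' : ℝ → H} {I : Set ℝ}

theorem hasDerivWithinAt_energy (hv : IsDampedOscillation ρ b v v' I) (hθ : θ ∈ I) :
    HasDerivWithinAt (fun τ ↦ oscillatorEnergy ρ (v τ) (v' τ)) (-(b θ * ‖v' θ‖ ^ 2)) I θ := by
  have hderiv := ((hv.hasDerivWithinAt_velocity θ hθ).norm_sq.add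
    ((hv.hasDerivWithinAt θ hθ).norm_sq.const_mul (ρ ^ 2))).const_mul (1 / 2)
  refine hderiv.congr_deriv ?_
  rw [inner_sub_right, inner_neg_right, real_inner_smul_right, real_inner_smul_right,
    real_inner_self_eq_norm_sq, real_inner_comm]
  ring

theorem hasDerivWithinAt_inner (hv : IsDampedOscillation ρ b v v' I) (hθ : θ ∈ I) :
    HasDerivWithinAt (fun τ ↦ ⟪v τ, v' τ⟫)
      (‖v' θ‖ ^ 2 - ρ ^ 2 * ‖v θ‖ ^ 2 - b θ * ⟪v θ, v' θ⟫) I θ := by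
  refine ((hv.hasDerivWithinAt θ hθ).inner ℝ (hv.hasDerivWithinAt_velocity θ hθ)).congr_deriv ?_
  rw [inner_sub_right, inner_neg_right, real_inner_smul_right, real_inner_smul_right,
    real_inner_self_eq_norm_sq, real_inner_self_eq_norm_sq]
  ring

end IsDampedOscillation

/-- On the set `I`, the nonnegative function `K` with derivative `K'` is a multiplier of the energy
for the oscillator of frequency `ρ` and damping `b`, with constants `lam₁`, `lam₂`, `lam₃`.
Derivatives are taken within `I`. -/
structure IsEnergyMultiplier (lam₁ lam₂ lam₃ ρ : ℝ) (b K K' : ℝ → ℝ) (I : Set ℝ) : Prop where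
  hasDerivWithinAt : ∀ θ ∈ I, HasDerivWithinAt K (K' θ) I θ
  nonneg : ∀ θ ∈ I, 0 ≤ K θ
  le_damping : ∀ θ ∈ I, K θ ≤ lam₁ * b θ
  damping_mul_le : ∀ θ ∈ I, b θ * K θ ≤ lam₂ * ρ ^ 2
  deriv_sq_le : ∀ θ ∈ I, K' θ ^ 2 ≤ lam₃ * b θ * K θ * ρ ^ 2

/-- The Lyapunov function of the multiplier method: the energy with weight `2 * Λ`, corrected by the
cross term with the value `k` of the multiplier. -/
noncomputable def multiplierFunctional (Λ ρ k : ℝ) (x y : H) : ℝ :=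
  2 * k * ⟪x, y⟫ + 2 * Λ * oscillatorEnergy ρ x y

namespace IsEnergyMultiplier

variable {lam₁ lam₂ lam₃ ρ θ : ℝ} {b K K' : ℝ → ℝ} {I : Set ℝ}

theorem sq_le (hK : IsEnergyMultiplier lam₁ lam₂ lam₃ ρ b K K' I) (hlam₁ : 0 ≤ lam₁)
    (hθ : θ ∈ I) : K θ ^ 2 ≤ lam₁ * lam₂ * ρ ^ 2 :=
  calc K θ ^ 2 = K θ * K θ := sq _
    _ ≤ lam₁ * b θ * K θ := mul_le_mul_of_nonneg_right (hK.le_damping θ hθ) (hK.nonneg θ hθ)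
    _ = lam₁ * (b θ * K θ) := mul_assoc _ _ _
    _ ≤ lam₁ * (lam₂ * ρ ^ 2) := mul_le_mul_of_nonneg_left (hK.damping_mul_le θ hθ) hlam₁
    _ = lam₁ * lam₂ * ρ ^ 2 := (mul_assoc _ _ _).symm

theorem abs_two_mul_inner_le (hK : IsEnergyMultiplier lam₁ lam₂ lam₃ ρ b K K' I)
    (hlam₁ : 0 ≤ lam₁) (hlam₂ : 0 ≤ lam₂) (hθ : θ ∈ I) (x y : H) :
    |2 * K θ * ⟪x, y⟫| ≤ (lam₁ + lam₂) * oscillatorEnergy ρ x y := by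
  have discriminant_le :
      (2 * K θ) ^ 2 ≤ 4 * ((lam₁ + lam₂) / 2 * ρ ^ 2) * ((lam₁ + lam₂) / 2) :=
    calc (2 * K θ) ^ 2 = 4 * K θ ^ 2 := by ring
      _ ≤ 4 * (lam₁ * lam₂ * ρ ^ 2) := by gcongr; exact hK.sq_le hlam₁ hθ
      _ = 4 * lam₁ * lam₂ * ρ ^ 2 := by ring
      _ ≤ (lam₁ + lam₂) ^ 2 * ρ ^ 2 := by gcongr; exact four_mul_le_sq_add _ _
      _ = 4 * ((lam₁ + lam₂) / 2 * ρ ^ 2) * ((lam₁ + lam₂) / 2) := by ring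
  calc |2 * K θ * ⟪x, y⟫|
      ≤ (lam₁ + lam₂) / 2 * ρ ^ 2 * ‖x‖ ^ 2 + (lam₁ + lam₂) / 2 * ‖y‖ ^ 2 :=
        abs_mul_inner_le_of_sq_le (by positivity) (by positivity) discriminant_le x y
    _ = (lam₁ + lam₂) * oscillatorEnergy ρ x y := by unfold oscillatorEnergy; ring

theorem abs_multiplierFunctional_sub_le (hK : IsEnergyMultiplier lam₁ lam₂ lam₃ ρ b K K' I)
    (hlam₁ : 0 ≤ lam₁) (hlam₂ : 0 ≤ lam₂) (hlam₃ : 0 ≤ lam₃) (hθ : θ ∈ I) (x y : H) :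
    |multiplierFunctional (lam₁ + lam₂ + lam₃) ρ (K θ) x y -
        2 * (lam₁ + lam₂ + lam₃) * oscillatorEnergy ρ x y| ≤
      (lam₁ + lam₂ + lam₃) * oscillatorEnergy ρ x y := by
  rw [multiplierFunctional, add_sub_cancel_right]
  refine (hK.abs_two_mul_inner_le hlam₁ hlam₂ hθ x y).trans ?_
  exact mul_le_mul_of_nonneg_right (le_add_of_nonneg_right hlam₃) (oscillatorEnergy_nonneg ρ x y)

theorem multiplierFunctional_nonneg (hK : IsEnergyMultiplier lam₁ lam₂ lam₃ ρ b K K' I)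
    (hlam₁ : 0 ≤ lam₁) (hlam₂ : 0 ≤ lam₂) (hlam₃ : 0 ≤ lam₃) (hθ : θ ∈ I) (x y : H) :
    0 ≤ multiplierFunctional (lam₁ + lam₂ + lam₃) ρ (K θ) x y := by
  have hE : 0 ≤ (lam₁ + lam₂ + lam₃) * oscillatorEnergy ρ x y :=
    mul_nonneg (by positivity) (oscillatorEnergy_nonneg ρ x y)
  linarith [abs_le.mp (hK.abs_multiplierFunctional_sub_le hlam₁ hlam₂ hlam₃ hθ x y)]

theorem multiplierFunctional_le (hK : IsEnergyMultiplier lam₁ lam₂ lam₃ ρ b K K' I)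
    (hlam₁ : 0 ≤ lam₁) (hlam₂ : 0 ≤ lam₂) (hlam₃ : 0 ≤ lam₃) (hθ : θ ∈ I) (x y : H) :
    multiplierFunctional (lam₁ + lam₂ + lam₃) ρ (K θ) x y ≤
      3 * (lam₁ + lam₂ + lam₃) * oscillatorEnergy ρ x y := by
  linarith [abs_le.mp (hK.abs_multiplierFunctional_sub_le hlam₁ hlam₂ hlam₃ hθ x y)]

theorem deriv_mul_inner_le (hK : IsEnergyMultiplier lam₁ lam₂ lam₃ ρ b K K' I)
    (hlam₃ : 0 ≤ lam₃) (hb : 0 ≤ b θ) (hθ : θ ∈ I) (x y : H) :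
    K' θ * ⟪x, y⟫ ≤ K θ * ρ ^ 2 / 4 * ‖x‖ ^ 2 + lam₃ * b θ * ‖y‖ ^ 2 := by
  have hKθ := hK.nonneg θ hθ
  refine (le_abs_self _).trans (abs_mul_inner_le_of_sq_le (by positivity) (by positivity) ?_ x y)
  linarith [hK.deriv_sq_le θ hθ]

theorem neg_damping_mul_inner_le (hK : IsEnergyMultiplier lam₁ lam₂ lam₃ ρ b K K' I)
    (hlam₂ : 0 ≤ lam₂) (hb : 0 ≤ b θ) (hθ : θ ∈ I) (x y : H) :
    -(b θ * K θ * ⟪x, y⟫) ≤ K θ * ρ ^ 2 / 4 * ‖x‖ ^ 2 + lam₂ * b θ * ‖y‖ ^ 2 := by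
  have hKθ := hK.nonneg θ hθ
  refine (neg_le_abs _).trans (abs_mul_inner_le_of_sq_le (by positivity) (by positivity) ?_ x y)
  calc (b θ * K θ) ^ 2 = b θ * K θ * (b θ * K θ) := sq _
    _ ≤ lam₂ * ρ ^ 2 * (b θ * K θ) :=
        mul_le_mul_of_nonneg_right (hK.damping_mul_le θ hθ) (by positivity)
    _ = 4 * (K θ * ρ ^ 2 / 4) * (lam₂ * b θ) := by ring

theorem multiplierFunctional_deriv_le (hK : IsEnergyMultiplier lam₁ lam₂ lam₃ ρ b K K' I)
    (hlam₂ : 0 ≤ lam₂) (hlam₃ : 0 ≤ lam₃) (hb : 0 ≤ b θ) (hθ : θ ∈ I) (x y : H) :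
    2 * K' θ * ⟪x, y⟫ + 2 * K θ * (‖y‖ ^ 2 - ρ ^ 2 * ‖x‖ ^ 2 - b θ * ⟪x, y⟫) +
        2 * (lam₁ + lam₂ + lam₃) * -(b θ * ‖y‖ ^ 2) ≤
      -(K θ * ρ ^ 2 * ‖x‖ ^ 2) := by
  have kinetic_le : K θ * ‖y‖ ^ 2 ≤ lam₁ * b θ * ‖y‖ ^ 2 :=
    mul_le_mul_of_nonneg_right (hK.le_damping θ hθ) (sq_nonneg _)
  linarith [kinetic_le, hK.deriv_mul_inner_le hlam₃ hb hθ x y,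
    hK.neg_damping_mul_inner_le hlam₂ hb hθ x y]

theorem hasDerivWithinAt_multiplierFunctional {v v' : ℝ → H}
    (hK : IsEnergyMultiplier lam₁ lam₂ lam₃ ρ b K K' I) (hv : IsDampedOscillation ρ b v v' I)
    (Λ : ℝ) (hθ : θ ∈ I) :
    HasDerivWithinAt (fun τ ↦ multiplierFunctional Λ ρ (K τ) (v τ) (v' τ))
      (2 * K' θ * ⟪v θ, v' θ⟫ +
        2 * K θ * (‖v' θ‖ ^ 2 - ρ ^ 2 * ‖v θ‖ ^ 2 - b θ * ⟪v θ, v' θ⟫) +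
        2 * Λ * -(b θ * ‖v' θ‖ ^ 2)) I θ :=
  (((hK.hasDerivWithinAt θ hθ).const_mul 2).mul (hv.hasDerivWithinAt_inner hθ)).add
    ((hv.hasDerivWithinAt_energy hθ).const_mul (2 * Λ))

end IsEnergyMultiplier

theorem energy_multiplier_integral_bound_general {lam₁ lam₂ lam₃ ρ s t : ℝ} {b K K' : ℝ → ℝ}
    {v v' : ℝ → H} (hlam₁ : 0 ≤ lam₁) (hlam₂ : 0 ≤ lam₂) (hlam₃ : 0 ≤ lam₃) (hst : s ≤ t)
    (hb : ∀ θ ∈ Set.Icc s t, 0 ≤ b θ) (hv : IsDampedOscillation ρ b v v' (Set.Icc s t))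
    (hK : IsEnergyMultiplier lam₁ lam₂ lam₃ ρ b K K' (Set.Icc s t)) :
    ∫ θ in s..t, K θ * ρ ^ 2 * ‖v θ‖ ^ 2 ≤
      3 * (lam₁ + lam₂ + lam₃) * oscillatorEnergy ρ (v s) (v' s) := by
  set F : ℝ → ℝ := fun θ ↦ multiplierFunctional (lam₁ + lam₂ + lam₃) ρ (K θ) (v θ) (v' θ)
  have hcontinuous : ContinuousOn (fun θ ↦ K θ * ρ ^ 2 * ‖v θ‖ ^ 2) (Set.Icc s t) := by
    have hKc : ContinuousOn K (Set.Icc s t) := fun θ hθ ↦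
      (hK.hasDerivWithinAt θ hθ).continuousWithinAt
    have hvc : ContinuousOn v (Set.Icc s t) := fun θ hθ ↦
      (hv.hasDerivWithinAt θ hθ).continuousWithinAt
    fun_prop
  have integral_le : ∫ θ in s..t, K θ * ρ ^ 2 * ‖v θ‖ ^ 2 ≤ F s - F t :=
    integral_le_sub_of_hasDerivWithinAt_le_neg hst
      (fun θ hθ ↦ hK.hasDerivWithinAt_multiplierFunctional hv _ hθ) hcontinuous.integrableOn_Icc
      fun θ hθ ↦ have hθ' := Set.Ioo_subset_Icc_self hθ
        hK.multiplierFunctional_deriv_le hlam₂ hlam₃ (hb θ hθ') hθ' _ _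
  have F_t_nonneg : 0 ≤ F t :=
    hK.multiplierFunctional_nonneg hlam₁ hlam₂ hlam₃ (Set.right_mem_Icc.mpr hst) _ _
  calc ∫ θ in s..t, K θ * ρ ^ 2 * ‖v θ‖ ^ 2 ≤ F s - F t := integral_le
    _ ≤ F s := sub_le_self _ F_t_nonneg
    _ ≤ 3 * (lam₁ + lam₂ + lam₃) * oscillatorEnergy ρ (v s) (v' s) :=
      hK.multiplierFunctional_le hlam₁ hlam₂ hlam₃ (Set.left_mem_Icc.mpr hst) _ _

end InnerProductSpace

/-- Proposition `Prop:Effective-integrable-EM5-Zdiss` of the paper (Proposition 2.1 of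
[JuniordaLuzNoneffective]): an energy multiplier `K` yields the integral bound
`∫ₛᵗ K ρ² |v|² ≤ C·E(s)`. -/
theorem energy_multiplier_integral_bound
    (lam₁ lam₂ lam₃ : ℝ) (hlam₁ : 0 ≤ lam₁) (hlam₂ : 0 ≤ lam₂) (hlam₃ : 0 ≤ lam₃) :
    ∃ C : ℝ, 0 < C ∧
      ∀ (ρ : ℝ), 0 < ρ → ∀ (t₁ t₂ : ℝ), t₁ ≤ t₂ →
        ∀ (btilde : ℝ → ℝ), ContinuousOn btilde (Set.Icc t₁ t₂) →
          (∀ t ∈ Set.Icc t₁ t₂, 0 < btilde t) →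
          ∀ v : ℝ → ℂ, ContDiff ℝ 2 v →
            (∀ t ∈ Set.Icc t₁ t₂,
              deriv (deriv v) t + ((ρ ^ 2 : ℝ) : ℂ) * v t +
                ((btilde t : ℝ) : ℂ) * deriv v t = 0) →
            ∀ K : ℝ → ℝ, ContDiff ℝ 1 K → (∀ t ∈ Set.Icc t₁ t₂, 0 ≤ K t) →
              (∀ t ∈ Set.Icc t₁ t₂, K t ≤ lam₁ * btilde t) →
              (∀ t ∈ Set.Icc t₁ t₂, btilde t * K t ≤ lam₂ * ρ ^ 2) →
              (∀ t ∈ Set.Icc t₁ t₂, (deriv K t) ^ 2 ≤ lam₃ * btilde t * K t * ρ ^ 2) →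
              ∀ s t : ℝ, t₁ ≤ s → s ≤ t → t ≤ t₂ →
                (∫ θ in s..t, K θ * ρ ^ 2 * ‖v θ‖ ^ 2) ≤
                  C * ((1 / 2) * (‖deriv v s‖ ^ 2 + ρ ^ 2 * ‖v s‖ ^ 2)) := by
  refine ⟨3 * (lam₁ + lam₂ + lam₃) + 1, by positivity, ?_⟩
  intro ρ _ t₁ t₂ _ b _ hb v hv hode K hK hK₀ hKb hbK hK' s t hs hst ht
  have hI : Set.Icc s t ⊆ Set.Icc t₁ t₂ := Set.Icc_subset_Icc hs ht
  have hosc : IsDampedOscillation ρ b v (deriv v) (Set.Icc s t) :=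
    .of_contDiff hv fun θ hθ ↦ by simpa only [Complex.real_smul] using hode θ (hI hθ)
  have hmul : IsEnergyMultiplier lam₁ lam₂ lam₃ ρ b K (deriv K) (Set.Icc s t) :=
    ⟨fun θ _ ↦ (hK.differentiable one_ne_zero θ).hasDerivAt.hasDerivWithinAt,
      fun θ hθ ↦ hK₀ θ (hI hθ), fun θ hθ ↦ hKb θ (hI hθ), fun θ hθ ↦ hbK θ (hI hθ),
      fun θ hθ ↦ hK' θ (hI hθ)⟩
  exact (energy_multiplier_integral_bound_general hlam₁ hlam₂ hlam₃ hst
    (fun θ hθ ↦ (hb θ (hI hθ)).le) hosc hmul).trans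
      (mul_le_mul_of_nonneg_right (le_add_of_nonneg_right zero_le_one)
        (oscillatorEnergy_nonneg ρ (v s) (deriv v s)))
end
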